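/- arXiv:2206.14224 — 4 statements merged into one kernel-verified Lean document; each statement's English description precedes it below -/
import Mathlib

section
/- There exists a Borel equivalence relation F on 𝓔_∞ such that for every m ∈ ℕ and every B ∈ 𝓔_∞, the restriction of F to the set [m,B]_∞ = {A ∈ 𝓔_∞ : A ≤ B and A, B agree on {0,…,m−1}} is Borel bireducible with the equivalence relation E_1 on 2^{ℕ×ℕ}. -/
open Classical

/-- The space `𝓔_∞` of equivalence relations on `ℕ` with infinitely many classes
(infinite partitions of `ℕ`). -/
def Einf : Type := {A : Setoid ℕ // Infinite (Quotient A)}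

namespace Einf

/-- `Coarsen A B` (written `A ≤ B` in the paper): `A` is a coarsening of `B`,
i.e. every `A`-class is a union of `B`-classes. -/
def Coarsen (A B : Einf) : Prop := ∀ i j : ℕ, B.1 i j → A.1 i j

/-- `μ_n(A)`: the `(n+1)`-st smallest minimal representative of an `A`-class. -/
noncomputable def mu (A : Einf) (n : ℕ) : ℕ :=
  Nat.nth (fun k => ∀ m, A.1 m k → k ≤ m) n

/-- `𝓔_∞^fin`: equivalence relations on initial segments `{0,…,k−1}` of `ℕ`. -/
def FinApprox : Type := Σ k : ℕ, Setoid (Fin k)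

/-- `r_n(A)`: the restriction of `A` to `{0,…,μ_n(A)−1}`. -/
noncomputable def rn (A : Einf) (n : ℕ) : FinApprox :=
  ⟨A.mu n, Setoid.comap (fun i => (i : ℕ)) A.1⟩

/-- `s ⊑ A`: `s` is an initial approximation of `A`, i.e. `s = r_n(A)` for some `n`. -/
def InitSeg (s : FinApprox) (A : Einf) : Prop := ∃ n, rn A n = s

/-- The Ellentuck cube `[s, A] = {B ∈ 𝓔_∞ : s ⊑ B and B ≤ A}`. -/
def cube (s : FinApprox) (A : Einf) : Set Einf := {B | InitSeg s B ∧ Coarsen B A}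

/-- The identification of `𝓔_∞` with `𝓒𝓢 ⊆ 2^{ℕ×ℕ}`: `toCS A n m = 1` iff
`m` is `A`-equivalent to `μ_n(A)` (so the `n`-th row is the `A`-class of `μ_n(A)`). -/
noncomputable def toCS (A : Einf) : ℕ → ℕ → Bool :=
  fun n m => decide (A.1 m (A.mu n))

/-- The Borel structure of the Polish topology on `𝓔_∞`, pulled back from `2^{ℕ×ℕ}`. -/
noncomputable instance : MeasurableSpace Einf :=
  MeasurableSpace.comap toCS inferInstance

/-- `𝓧 ⊆ 𝓔_∞` is Ramsey null. -/
def RamseyNull (X : Set Einf) : Prop :=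
  ∀ s A, (cube s A).Nonempty → ∃ B ∈ cube s A, cube s B ∩ X = ∅

/-- `𝓧 ⊆ 𝓔_∞` is Ramsey conull: its complement is Ramsey null. -/
def RamseyConull (X : Set Einf) : Prop := RamseyNull Xᶜ

end Einf

open Einf

/-- The equivalence relation `E₁` on `2^{ℕ×ℕ}`: eventual (row-wise) equality. -/
def E1 (x y : ℕ → ℕ → Bool) : Prop := ∃ n₀ : ℕ, ∀ n m : ℕ, x (n₀ + n) m = y (n₀ + n) m

/-- The Carlson-Simpson cube `[m,B]_∞ = {A ∈ 𝓔_∞ : A ≤ B and A, B agree on {0,…,m−1}}`. -/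
def cubeM (m : ℕ) (B : Einf) : Set Einf :=
  {A | Coarsen A B ∧ ∀ i j : ℕ, i < m → j < m → (A.1 i j ↔ B.1 i j)}

/-!
Take `F` to be the restriction of `E₁` to `𝓔_∞ ≅ 𝓒𝓢`, so that the identification `toCS` reduces `F`
to `E₁` on every cube. For a reduction of `E₁` to `F` on `[m, B]_∞`, code `x ∈ 2^{ℕ×ℕ}` by the
partition whose `n`-th class consists of `⟨n, 0⟩` and of the `⟨n, i + 1⟩` with `x(n, i) = 1`,
for `n ≥ 1`, everything else being thrown into the class `0`. The points `⟨n, 0⟩` are the least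
elements of the classes whatever `x` is, so the `n`-th row of the code depends on, and for `n ≥ 1`
determines, only the `n`-th row of `x`; the loss of row `0` is invisible to `E₁`. Putting `m`
singletons in front and amalgamating the classes of `B` according to the resulting partition gives
an element of `[m, B]_∞`, and neither operation affects whether two codes are `E₁`-related.
-/

open Filter Function

lemma E1_iff_eventually_eq {x y : ℕ → ℕ → Bool} : E1 x y ↔ ∀ᶠ n in atTop, x n = y n := by
  simp only [E1, eventually_atTop, funext_iff]
  refine exists_congr fun n₀ => ⟨fun h n hn => ?_, fun h n => h (n₀ + n) (n₀.le_add_right n)⟩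
  simpa only [Nat.add_sub_cancel' hn] using h (n - n₀)

lemma E1_equivalence : Equivalence E1 where
  refl _ := E1_iff_eventually_eq.2 (.of_forall fun _ => rfl)
  symm h := E1_iff_eventually_eq.2 ((E1_iff_eventually_eq.1 h).mono fun _ => Eq.symm)
  trans h h' := E1_iff_eventually_eq.2 <|
    (E1_iff_eventually_eq.1 h).mp ((E1_iff_eventually_eq.1 h').mono fun _ hyz hxy => hxy.trans hyz)

lemma measurableSet_E1 : MeasurableSet {p : (ℕ → ℕ → Bool) × (ℕ → ℕ → Bool) | E1 p.1 p.2} := by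
  refine measurableSet_setOfPred.2 <|
    .exists fun n₀ => .forall fun n => .forall fun m => Measurable.eq ?_ ?_ <;> fun_prop

/-- The matrix whose `n`-th row is the indicator function of `f ⁻¹' {n}`. -/
def fibers (f : ℕ → ℕ) : ℕ → ℕ → Bool := fun n k => decide (f k = n)

lemma fibers_apply_eq_iff {f g : ℕ → ℕ} {n : ℕ} :
    fibers f n = fibers g n ↔ ∀ k, f k = n ↔ g k = n := by
  simp only [fibers, funext_iff, decide_eq_decide]

lemma E1_fibers_comp_iff {r : ℕ → ℕ} (hr : Surjective r) (f g : ℕ → ℕ) :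
    E1 (fibers (f ∘ r)) (fibers (g ∘ r)) ↔ E1 (fibers f) (fibers g) := by
  have row_iff (n : ℕ) :
      fibers (f ∘ r) n = fibers (g ∘ r) n ↔ fibers f n = fibers g n :=
    hr.injective_comp_right.eq_iff (a := fibers f n) (b := fibers g n)
  simp only [E1_iff_eventually_eq, row_iff]

/-- `f` labels the points of `ℕ` by the classes of a partition, numbered in the order of their least
elements, and `s n` is the least element of the `n`-th class. In combinatorics such an `f` is called
a restricted growth function. -/
structure IsRestrictedGrowth (f s : ℕ → ℕ) : Prop where
  strictMono : StrictMono s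
  rightInverse : RightInverse s f
  le : ∀ k, s (f k) ≤ k

namespace IsRestrictedGrowth

variable {f g s t : ℕ → ℕ}

lemma surjective (h : IsRestrictedGrowth f s) : Surjective f := h.rightInverse.surjective

lemma apply_le (h : IsRestrictedGrowth f s) (k : ℕ) : f k ≤ k :=
  h.strictMono.le_apply.trans (h.le k)

lemma comp (hg : IsRestrictedGrowth g t) (hf : IsRestrictedGrowth f s) :
    IsRestrictedGrowth (g ∘ f) (s ∘ t) where
  strictMono := hf.strictMono.comp hg.strictMono
  rightInverse := hg.rightInverse.comp hf.rightInverse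
  le k := (hf.strictMono.monotone (hg.le (f k))).trans (hf.le k)

end IsRestrictedGrowth

/-- The labelling of the partition obtained from that of `f` by shifting it up by `m` and adding the
classes `{0}, …, {m - 1}`. -/
def prependSingletons (m : ℕ) (f : ℕ → ℕ) (k : ℕ) : ℕ := if k < m then k else f (k - m) + m

lemma prependSingletons_of_lt {m k : ℕ} (f : ℕ → ℕ) (hk : k < m) : prependSingletons m f k = k :=
  if_pos hk

lemma prependSingletons_add (m : ℕ) (f : ℕ → ℕ) (k : ℕ) :
    prependSingletons m f (k + m) = f k + m := by
  simp [prependSingletons]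

lemma prependSingletons_eq_add_iff {m k n : ℕ} {f : ℕ → ℕ} :
    prependSingletons m f k = n + m ↔ m ≤ k ∧ f (k - m) = n := by
  unfold prependSingletons
  split_ifs <;> omega

lemma isRestrictedGrowth_prependSingletons {f s : ℕ → ℕ} (h : IsRestrictedGrowth f s) (m : ℕ) :
    IsRestrictedGrowth (prependSingletons m f) (prependSingletons m s) where
  strictMono i j hij := by
    have := @h.strictMono (i - m) (j - m)
    unfold prependSingletons
    split_ifs <;> omega
  rightInverse n := by
    obtain hn | hn := lt_or_ge n m
    · rw [prependSingletons_of_lt s hn, prependSingletons_of_lt f hn]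
    · obtain ⟨n, rfl⟩ := Nat.exists_eq_add_of_le' hn
      rw [prependSingletons_add, prependSingletons_add, h.rightInverse]
  le k := by
    obtain hk | hk := lt_or_ge k m
    · rw [prependSingletons_of_lt f hk, prependSingletons_of_lt s hk]
    · obtain ⟨k, rfl⟩ := Nat.exists_eq_add_of_le' hk
      rw [prependSingletons_add, prependSingletons_add]
      exact Nat.add_le_add_right (h.le k) m

lemma E1_fibers_prependSingletons_iff (m : ℕ) (f g : ℕ → ℕ) :
    E1 (fibers (prependSingletons m f)) (fibers (prependSingletons m g)) ↔
      E1 (fibers f) (fibers g) := by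
  simp only [E1_iff_eventually_eq]
  conv_lhs => rw [← map_add_atTop_eq_nat m, eventually_map]
  refine eventually_congr (.of_forall fun n => ?_)
  simp only [fibers_apply_eq_iff, prependSingletons_eq_add_iff]
  refine ⟨fun h k => ?_, fun h k => and_congr_right fun _ => h (k - m)⟩
  simpa using h (k + m)

/-- The labelling of the partition of `ℕ × ℕ`, identified with `ℕ` by pairing, that codes the rows
of `x`. Column `0` is reserved for the least elements of the classes, so the columns of `x` are
moved up by one. -/
def rowLabel (x : ℕ → ℕ → Bool) (k : ℕ) : ℕ :=
  match k.unpair with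
  | (n, 0) => n
  | (n, i + 1) => bif x n i then n else 0

lemma rowLabel_pair_zero (x : ℕ → ℕ → Bool) (n : ℕ) : rowLabel x (n.pair 0) = n := by
  simp only [rowLabel, Nat.unpair_pair]

lemma rowLabel_pair_succ (x : ℕ → ℕ → Bool) (n i : ℕ) :
    rowLabel x (n.pair (i + 1)) = bif x n i then n else 0 := by
  simp only [rowLabel, Nat.unpair_pair]

lemma forall_nat_iff_forall_pair {p : ℕ → Prop} :
    (∀ k, p k) ↔ ∀ n, p (Nat.pair n 0) ∧ ∀ i, p (Nat.pair n (i + 1)) := by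
  rw [Nat.pairEquiv.surjective.forall, Prod.forall]
  exact forall_congr' fun _ => Nat.and_forall_add_one.symm

lemma isRestrictedGrowth_rowLabel (x : ℕ → ℕ → Bool) :
    IsRestrictedGrowth (rowLabel x) (fun n => n.pair 0) where
  strictMono _ _ := Nat.pair_lt_pair_left 0
  rightInverse := rowLabel_pair_zero x
  le := by
    refine forall_nat_iff_forall_pair.2 fun n => ⟨by rw [rowLabel_pair_zero], fun i => ?_⟩
    rw [rowLabel_pair_succ]
    cases x n i
    · exact Nat.zero_le _
    · exact (Nat.pair_lt_pair_right n i.succ_pos).le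

lemma fibers_rowLabel_apply_eq_iff {x y : ℕ → ℕ → Bool} {n : ℕ} (hn : n ≠ 0) :
    fibers (rowLabel x) n = fibers (rowLabel y) n ↔ x n = y n := by
  have pair_succ (z : ℕ → ℕ → Bool) (a i : ℕ) :
      rowLabel z (a.pair (i + 1)) = n ↔ a = n ∧ z n i = true := by
    rw [rowLabel_pair_succ]
    cases h : z a i <;> grind
  rw [fibers_apply_eq_iff, forall_nat_iff_forall_pair, funext_iff]
  simp only [rowLabel_pair_zero, pair_succ, true_and, and_congr_right_iff, Bool.coe_iff_coe]
  exact ⟨fun h i => h n i rfl, fun h _ i _ => h i⟩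

lemma E1_fibers_rowLabel_iff (x y : ℕ → ℕ → Bool) :
    E1 (fibers (rowLabel x)) (fibers (rowLabel y)) ↔ E1 x y := by
  simp only [E1_iff_eventually_eq]
  exact eventually_congr ((eventually_ne_atTop 0).mono fun n => fibers_rowLabel_apply_eq_iff)

lemma measurable_rowLabel : Measurable rowLabel := by
  refine measurable_pi_lambda _ (forall_nat_iff_forall_pair.2 fun n => ⟨?_, fun i => ?_⟩)
  · simp only [rowLabel_pair_zero, measurable_const]
  · simp only [rowLabel_pair_succ]
    exact (measurable_of_countable fun b : Bool => bif b then n else 0).comp (by fun_prop)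

lemma measurable_prependSingletons (m : ℕ) : Measurable (prependSingletons m) := by
  refine measurable_pi_lambda _ fun k => ?_
  unfold prependSingletons
  split_ifs <;> fun_prop

lemma measurable_fibers : Measurable fibers := by
  refine measurable_pi_lambda _ fun n => measurable_pi_lambda _ fun k => ?_
  exact (measurable_of_countable fun j => decide (j = n)).comp (measurable_pi_apply k)

namespace Einf

lemma measurable_toCS : Measurable toCS := comap_measurable toCS

/-- `k` is the least element of its `A`-class; `μ(A)` is the set of these `k`. -/
def IsClassMin (A : Einf) (k : ℕ) : Prop := ∀ m, A.1 m k → k ≤ m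

lemma mu_eq_nth (A : Einf) : A.mu = Nat.nth A.IsClassMin := rfl

/-- The partition of `ℕ` into the fibers of a surjection. -/
def ofSurjective (f : ℕ → ℕ) (hf : Surjective f) : Einf :=
  ⟨Setoid.ker f, .of_injective _ (Setoid.quotientKerEquivOfSurjective f hf).symm.injective⟩

lemma isClassMin_ofSurjective {f s : ℕ → ℕ} (h : IsRestrictedGrowth f s) (k : ℕ) :
    (ofSurjective f h.surjective).IsClassMin k ↔ k ∈ Set.range s := by
  constructor
  · intro hk
    exact ⟨f k, (h.le k).antisymm (hk _ (h.rightInverse (f k)))⟩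
  · rintro ⟨n, rfl⟩ i (hi : f i = f (s n))
    rw [h.rightInverse n] at hi
    exact hi ▸ h.le i

lemma mu_ofSurjective {f s : ℕ → ℕ} (h : IsRestrictedGrowth f s) :
    (ofSurjective f h.surjective).mu = s := by
  have hmin := isClassMin_ofSurjective h
  have hinf : {k | (ofSurjective f h.surjective).IsClassMin k}.Infinite := by
    simpa only [hmin] using! Set.infinite_range_of_injective h.strictMono.injective
  funext n
  rw [mu_eq_nth, ← Nat.nth_comp_of_strictMono h.strictMono (fun k => (hmin k).1)
    fun hfin => absurd hfin hinf]
  simp only [hmin, Set.mem_range_self, Nat.nth_true]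

lemma toCS_ofSurjective {f s : ℕ → ℕ} (h : IsRestrictedGrowth f s) :
    toCS (ofSurjective f h.surjective) = fibers f := by
  funext n k
  rw [toCS, fibers, decide_eq_decide, mu_ofSurjective h]
  change f k = f (s n) ↔ f k = n
  rw [h.rightInverse n]

/-- The least element of the `A`-class of `k`. -/
noncomputable def classMin (A : Einf) (k : ℕ) : ℕ := sInf {i | A.1 i k}

lemma classMin_rel (A : Einf) (k : ℕ) : A.1 (A.classMin k) k :=
  Nat.sInf_mem (s := {i | A.1 i k}) ⟨k, A.1.refl k⟩

lemma classMin_le {A : Einf} {i k : ℕ} (h : A.1 i k) : A.classMin k ≤ i := Nat.sInf_le h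

lemma isClassMin_classMin (A : Einf) (k : ℕ) : A.IsClassMin (A.classMin k) :=
  fun _ h => classMin_le (A.1.trans h (A.classMin_rel k))

lemma IsClassMin.classMin_eq {A : Einf} {k : ℕ} (h : A.IsClassMin k) : A.classMin k = k :=
  (classMin_le (A.1.refl k)).antisymm (h _ (A.classMin_rel k))

lemma classMin_eq_iff (A : Einf) {i j : ℕ} : A.classMin i = A.classMin j ↔ A.1 i j := by
  refine ⟨fun h => ?_, fun h => ?_⟩
  · exact A.1.trans (A.1.symm (A.classMin_rel i)) (h ▸ A.classMin_rel j)
  · exact (classMin_le (A.1.trans (A.classMin_rel j) (A.1.symm h))).antisymm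
      (classMin_le (A.1.trans (A.classMin_rel i) h))

lemma infinite_isClassMin (A : Einf) : {k | A.IsClassMin k}.Infinite := by
  have := A.2
  refine Set.infinite_of_injective_forall_mem (f := fun q : Quotient A.1 => A.classMin q.out)
    (fun p q h => ?_) fun q => A.isClassMin_classMin _
  exact Quotient.out_equiv_out.1 (A.classMin_eq_iff.1 h)

/-- The position of the `A`-class of `k` in the enumeration of the `A`-classes by their least
elements. -/
noncomputable def classIndex (A : Einf) (k : ℕ) : ℕ := Nat.count A.IsClassMin (A.classMin k)

lemma mu_classIndex (A : Einf) (k : ℕ) : A.mu (A.classIndex k) = A.classMin k :=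
  Nat.nth_count (A.isClassMin_classMin k)

lemma classIndex_eq_iff (A : Einf) {i j : ℕ} : A.classIndex i = A.classIndex j ↔ A.1 i j := by
  refine ⟨fun h => A.classMin_eq_iff.1 ?_, fun h => ?_⟩
  · rw [← mu_classIndex, h, mu_classIndex]
  · rw [classIndex, A.classMin_eq_iff.2 h, classIndex]

lemma isRestrictedGrowth_classIndex (A : Einf) : IsRestrictedGrowth A.classIndex A.mu where
  strictMono := Nat.nth_strictMono A.infinite_isClassMin
  rightInverse n := by
    have hmin : A.IsClassMin (A.mu n) := Nat.nth_mem_of_infinite A.infinite_isClassMin n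
    rw [classIndex, hmin.classMin_eq]
    exact Nat.count_nth_of_infinite A.infinite_isClassMin n
  le k := (A.mu_classIndex k).trans_le (classMin_le (A.1.refl k))

lemma ofSurjective_prependSingletons_mem_cubeM {m : ℕ} {B : Einf} {f : ℕ → ℕ}
    (hf : Surjective (prependSingletons m f ∘ B.classIndex)) :
    ofSurjective (prependSingletons m f ∘ B.classIndex) hf ∈ cubeM m B := by
  refine ⟨fun i j h => congrArg (prependSingletons m f) (B.classIndex_eq_iff.2 h),
    fun i j hi hj => ?_⟩
  have index_lt {k : ℕ} (hk : k < m) : B.classIndex k < m :=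
    (B.isRestrictedGrowth_classIndex.apply_le k).trans_lt hk
  change prependSingletons m f (B.classIndex i) = prependSingletons m f (B.classIndex j) ↔ _
  rw [prependSingletons_of_lt f (index_lt hi), prependSingletons_of_lt f (index_lt hj),
    B.classIndex_eq_iff]

/-- The labelling of the partition in `[m, B]_∞` that codes `x`. -/
noncomputable def codeLabel (m : ℕ) (B : Einf) (x : ℕ → ℕ → Bool) : ℕ → ℕ :=
  prependSingletons m (rowLabel x) ∘ B.classIndex

lemma isRestrictedGrowth_codeLabel (m : ℕ) (B : Einf) (x : ℕ → ℕ → Bool) :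
    IsRestrictedGrowth (codeLabel m B x) (B.mu ∘ prependSingletons m fun n => n.pair 0) :=
  (isRestrictedGrowth_prependSingletons (isRestrictedGrowth_rowLabel x) m).comp
    B.isRestrictedGrowth_classIndex

/-- The partition in `[m, B]_∞` that codes `x`, with the `B`-classes in the role of the points. -/
noncomputable def code (m : ℕ) (B : Einf) (x : ℕ → ℕ → Bool) : Einf :=
  ofSurjective (codeLabel m B x) (isRestrictedGrowth_codeLabel m B x).surjective

lemma code_mem_cubeM (m : ℕ) (B : Einf) (x : ℕ → ℕ → Bool) : code m B x ∈ cubeM m B :=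
  ofSurjective_prependSingletons_mem_cubeM _

lemma toCS_code (m : ℕ) (B : Einf) (x : ℕ → ℕ → Bool) :
    toCS (code m B x) = fibers (codeLabel m B x) :=
  toCS_ofSurjective (isRestrictedGrowth_codeLabel m B x)

lemma measurable_code (m : ℕ) (B : Einf) : Measurable (code m B) := by
  have hlabel : Measurable (codeLabel m B) := measurable_pi_lambda _ fun k =>
    (measurable_pi_apply (B.classIndex k)).comp
      ((measurable_prependSingletons m).comp measurable_rowLabel)
  refine measurable_comap_iff.2 ?_
  simpa only [comp_def, toCS_code] using measurable_fibers.comp hlabel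

lemma E1_toCS_code_iff (m : ℕ) (B : Einf) (x y : ℕ → ℕ → Bool) :
    E1 (toCS (code m B x)) (toCS (code m B y)) ↔ E1 x y := by
  rw [toCS_code, toCS_code, codeLabel, codeLabel,
    E1_fibers_comp_iff B.isRestrictedGrowth_classIndex.surjective,
    E1_fibers_prependSingletons_iff, E1_fibers_rowLabel_iff]

end Einf

/-- Proposition 1.2: there is a Borel equivalence relation on `𝓔_∞` whose restriction to every
set of the form `[m,B]_∞` is Borel bireducible with `E₁` on `2^{ℕ×ℕ}`. -/
theorem E1_in_spectrum_of_einf :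
    ∃ F : Einf → Einf → Prop, Equivalence F ∧
      MeasurableSet {p : Einf × Einf | F p.1 p.2} ∧
      ∀ (m : ℕ) (B : Einf),
        (∃ f : ↥(cubeM m B) → (ℕ → ℕ → Bool), Measurable f ∧
          ∀ A A' : ↥(cubeM m B), (F A.1 A'.1 ↔ E1 (f A) (f A'))) ∧
        (∃ g : (ℕ → ℕ → Bool) → ↥(cubeM m B), Measurable g ∧
          ∀ x y : ℕ → ℕ → Bool, (E1 x y ↔ F (g x).1 (g y).1)) := by
  refine ⟨fun A A' => E1 (toCS A) (toCS A'), E1_equivalence.comap toCS, ?_, fun m B => ⟨?_, ?_⟩⟩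
  · exact (measurable_toCS.prodMap measurable_toCS) measurableSet_E1
  · exact ⟨fun A => toCS A.1, measurable_toCS.comp measurable_subtype_coe, fun _ _ => Iff.rfl⟩
  · exact ⟨fun x => ⟨code m B x, code_mem_cubeM m B x⟩, (measurable_code m B).subtype_mk,
      fun x y => (E1_toCS_code_iff m B x y).symm⟩
end

section
/- The equivalence relation E_1 on 2^{ℕ×ℕ} and the equivalence relation E_1^tail restricted to 𝓒𝓢 are Borel bireducible: there is a Borel map f : 𝓒𝓢 → 2^{ℕ×ℕ} with x E_1^tail x' ⇔ f(x) E_1 f(x') for all x, x' ∈ 𝓒𝓢, and there is a Borel map g : 2^{ℕ×ℕ} → 𝓒𝓢 with x E_1 x' ⇔ g(x) E_1^tail g(x') for all x, x' ∈ 2^{ℕ×ℕ}. -/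
/-- The equivalence relation `E₁^tail` on `2^{ℕ×ℕ}`: `x E₁^tail y` iff there are `n_x, n_y` with
`x(n_x+n, m) = y(n_y+n, m)` for all `n, m`. -/
def E1tail (x y : ℕ → ℕ → Bool) : Prop :=
  ∃ nx ny : ℕ, ∀ n m : ℕ, x (nx + n) m = y (ny + n) m

/-- `𝓒𝓢 ⊆ 2^{ℕ×ℕ}`: those `x` whose rows `A_n^x = {m : x(n,m) = 1}` are nonempty, partition `ℕ`,
and are listed in increasing order of their least elements. -/
def CSset : Set (ℕ → ℕ → Bool) :=
  {x | (∀ n : ℕ, ∃ m : ℕ, x n m = true) ∧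
       (∀ m : ℕ, ∃! n : ℕ, x n m = true) ∧
       (∀ n n' : ℕ, n < n' → sInf {m | x n m = true} < sInf {m | x n' m = true})}

open Filter Set

section TailEquivalence

variable {x y : ℕ → ℕ → Bool}

theorem E1_iff_eventuallyEq : E1 x y ↔ x =ᶠ[atTop] y := by
  simp only [E1, EventuallyEq, eventually_atTop, funext_iff]
  exact exists_congr fun n₀ =>
    ⟨fun h n hn => by simpa only [Nat.add_sub_cancel' hn] using h (n - n₀),
      fun h n => h (n₀ + n) (Nat.le_add_right n₀ n)⟩

theorem E1tail_iff_exists_forall_add_eq :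
    E1tail x y ↔ ∃ a b, ∀ n, x (a + n) = y (b + n) := by
  simp only [E1tail, funext_iff]

end TailEquivalence

section TailsOfSequences

variable {α : Type*}

theorem exists_range_add_eq_range_inter_Ici [Preorder α] {s : ℕ → α} (hs : Monotone s) {k : α}
    (hk : ∃ n, k ≤ s n) : ∃ a, range (fun n => s (a + n)) = range s ∩ Ici k := by
  classical
  refine ⟨Nat.find hk, Subset.antisymm ?_ ?_⟩
  · rintro _ ⟨n, rfl⟩
    exact ⟨mem_range_self _, (Nat.find_spec hk).trans (hs (Nat.le_add_right _ n))⟩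
  · rintro _ ⟨⟨n, rfl⟩, hn⟩
    exact ⟨n - Nat.find hk, congrArg s (Nat.add_sub_cancel' (Nat.find_min' hk hn))⟩

theorem exists_add_eq_of_range_inter_Ici_eq [PartialOrder α] {s t : ℕ → α} (hs : StrictMono s)
    (ht : StrictMono t) {k : α} (hsk : ∃ n, k ≤ s n) (htk : ∃ n, k ≤ t n)
    (h : range s ∩ Ici k = range t ∩ Ici k) :
    ∃ a b, ∀ n, k ≤ s (a + n) ∧ s (a + n) = t (b + n) := by
  obtain ⟨a, ha⟩ := exists_range_add_eq_range_inter_Ici hs.monotone hsk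
  obtain ⟨b, hb⟩ := exists_range_add_eq_range_inter_Ici ht.monotone htk
  have hab : (fun n => s (a + n)) = fun n => t (b + n) :=
    (StrictMono.range_inj (hs.comp (strictMono_id.const_add a))
      (ht.comp (strictMono_id.const_add b))).1 (ha.trans (h.trans hb.symm))
  have hka : ∀ n, s (a + n) ∈ range s ∩ Ici k := fun n => ha ▸ mem_range_self n
  exact ⟨a, b, fun n => ⟨(hka n).2, congrFun hab n⟩⟩

end TailsOfSequences

/-- The rows `A_n = {m | x n m = true}` are nonempty and their least elements `s n = min A_n` are
strictly increasing. Unlike `sInf`, which is `0` on `∅`, `IsLeast` includes the nonemptiness. -/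
structure HasIncreasingMinima (x : ℕ → ℕ → Bool) (s : ℕ → ℕ) : Prop where
  strictMono : StrictMono s
  isLeast : ∀ n, IsLeast {m | x n m = true} (s n)

theorem mem_CSset_iff {x : ℕ → ℕ → Bool} :
    x ∈ CSset ↔ (∃ s, HasIncreasingMinima x s) ∧ ∀ m, ∃! n, x n m = true := by
  constructor
  · rintro ⟨hne, hpart, hlt⟩
    exact ⟨⟨fun n => sInf {m | x n m = true}, fun _ _ h => hlt _ _ h,
      fun n => ⟨Nat.sInf_mem (hne n), fun _ hm => Nat.sInf_le hm⟩⟩, hpart⟩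
  · rintro ⟨⟨s, hs⟩, hpart⟩
    refine ⟨fun n => ⟨s n, (hs.isLeast n).1⟩, hpart, fun n n' h => ?_⟩
    rw [(hs.isLeast n).csInf_eq, (hs.isLeast n').csInf_eq]
    exact hs.strictMono h

section PlaceByMin

open scoped Classical in
/-- The reduction of `E1tail` to `E1`: the row of `x` with least element `k` becomes the row of
index `k`, and the rows whose index is not such a least element are empty. -/
noncomputable def placeByMin (x : ℕ → ℕ → Bool) (k m : ℕ) : Bool :=
  decide (∃ n, IsLeast {j | x n j = true} k ∧ x n m = true)

theorem placeByMin_eq_true_iff {x : ℕ → ℕ → Bool} {k m : ℕ} :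
    placeByMin x k m = true ↔ ∃ n, IsLeast {j | x n j = true} k ∧ x n m = true := by
  simp only [placeByMin, decide_eq_true_eq]

theorem measurable_placeByMin : Measurable placeByMin := by
  have hcoord (n m : ℕ) : Measurable fun x : ℕ → ℕ → Bool => x n m = true :=
    (measurable_of_countable (· = true)).comp (by fun_prop)
  have hleast (n k : ℕ) : Measurable fun x : ℕ → ℕ → Bool => IsLeast {j | x n j = true} k :=
    (hcoord n k).and <| .forall fun j => (hcoord n j).imp measurable_const
  refine measurable_pi_iff.2 fun k => measurable_pi_iff.2 fun m => measurable_to_bool ?_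
  simp only [preimage, mem_singleton_iff, placeByMin_eq_true_iff]
  exact measurableSet_setOfPred.2 <| .exists fun n => (hleast n k).and (hcoord n m)

variable {x y : ℕ → ℕ → Bool} {s t : ℕ → ℕ}

namespace HasIncreasingMinima

theorem eq_of_row_eq (hx : HasIncreasingMinima x s) (hy : HasIncreasingMinima y t) {n n' : ℕ}
    (h : x n = y n') : s n = t n' :=
  (hx.isLeast n).unique (h ▸ hy.isLeast n')

theorem placeByMin_apply (hx : HasIncreasingMinima x s) (n : ℕ) :
    placeByMin x (s n) = x n := by
  funext m
  rw [Bool.eq_iff_iff, placeByMin_eq_true_iff]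
  refine ⟨?_, fun h => ⟨n, hx.isLeast n, h⟩⟩
  rintro ⟨n', hleast, hm⟩
  rwa [hx.strictMono.injective (hleast.unique (hx.isLeast n'))]

theorem mem_range_iff_placeByMin (hx : HasIncreasingMinima x s) {k : ℕ} :
    k ∈ range s ↔ placeByMin x k k = true := by
  rw [placeByMin_eq_true_iff]
  constructor
  · rintro ⟨n, rfl⟩
    exact ⟨n, hx.isLeast n, (hx.isLeast n).1⟩
  · rintro ⟨n, hleast, -⟩
    exact ⟨n, (hx.isLeast n).unique hleast⟩

theorem placeByMin_le_placeByMin (hx : HasIncreasingMinima x s) {a b : ℕ}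
    (h : ∀ n, x (a + n) = y (b + n)) {k : ℕ} (hk : s a ≤ k) :
    placeByMin x k ≤ placeByMin y k := by
  refine fun m => Bool.le_iff_imp.2 fun hm => ?_
  rw [placeByMin_eq_true_iff] at hm ⊢
  obtain ⟨n, hleast, hm⟩ := hm
  obtain rfl := (hx.isLeast n).unique hleast
  obtain ⟨d, rfl⟩ := Nat.exists_eq_add_of_le (hx.strictMono.le_iff_le.1 hk)
  rw [h d] at hleast hm
  exact ⟨b + d, hleast, hm⟩

theorem exists_forall_add_eq_of_placeByMin_eventuallyEq (hx : HasIncreasingMinima x s)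
    (hy : HasIncreasingMinima y t) (h : placeByMin x =ᶠ[atTop] placeByMin y) :
    ∃ a b, ∀ n, x (a + n) = y (b + n) := by
  obtain ⟨k, hk⟩ := eventually_atTop.1 h
  have hrange : range s ∩ Ici k = range t ∩ Ici k := by
    ext j
    refine and_congr_left fun hj => ?_
    rw [hx.mem_range_iff_placeByMin, hy.mem_range_iff_placeByMin, hk j hj]
  obtain ⟨a, b, hab⟩ := exists_add_eq_of_range_inter_Ici_eq hx.strictMono hy.strictMono
    ⟨k, hx.strictMono.le_apply⟩ ⟨k, hy.strictMono.le_apply⟩ hrange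
  refine ⟨a, b, fun n => ?_⟩
  obtain ⟨hle, heq⟩ := hab n
  rw [← hx.placeByMin_apply, hk _ hle, heq, hy.placeByMin_apply]

theorem E1tail_iff_E1_placeByMin (hx : HasIncreasingMinima x s) (hy : HasIncreasingMinima y t) :
    E1tail x y ↔ E1 (placeByMin x) (placeByMin y) := by
  rw [E1tail_iff_exists_forall_add_eq, E1_iff_eventuallyEq]
  refine ⟨?_, hx.exists_forall_add_eq_of_placeByMin_eventuallyEq hy⟩
  rintro ⟨a, b, h⟩
  filter_upwards [eventually_ge_atTop (s a), eventually_ge_atTop (t b)] with k hak hbk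
  exact (hx.placeByMin_le_placeByMin h hak).antisymm
    (hy.placeByMin_le_placeByMin (fun n => (h n).symm) hbk)

end HasIncreasingMinima

end PlaceByMin

section BlockCode

/-- The index of the block containing `k` in the partition of `ℕ` coding `x`: `⟨n, 0⟩` belongs to
block `n`, and `⟨n, m + 1⟩` belongs to block `n` if `x n m = true` and to block `0` otherwise. -/
def blockIndex (x : ℕ → ℕ → Bool) (k : ℕ) : ℕ :=
  match k.unpair with
  | (n, 0) => n
  | (n, m + 1) => bif x n m then n else 0

/-- The reduction of `E1` to `E1tail`: row `n` is the block of index `n` of the partition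
`blockIndex x`. -/
def blockCode (x : ℕ → ℕ → Bool) (n k : ℕ) : Bool :=
  decide (blockIndex x k = n)

variable (x : ℕ → ℕ → Bool)

theorem blockIndex_pair_zero (n : ℕ) : blockIndex x (Nat.pair n 0) = n := by
  simp only [blockIndex, Nat.unpair_pair]

theorem blockIndex_pair_succ (n m : ℕ) :
    blockIndex x (Nat.pair n (m + 1)) = bif x n m then n else 0 := by
  simp only [blockIndex, Nat.unpair_pair]

theorem pair_blockIndex_zero_le (k : ℕ) : Nat.pair (blockIndex x k) 0 ≤ k := by
  obtain ⟨i, j, rfl⟩ : ∃ i j, Nat.pair i j = k := ⟨_, _, Nat.pair_unpair k⟩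
  cases j with
  | zero => rw [blockIndex_pair_zero]
  | succ m =>
    rw [blockIndex_pair_succ]
    cases x i m with
    | false => exact Nat.zero_le _
    | true => exact (Nat.pair_lt_pair_right i m.succ_pos).le

theorem hasIncreasingMinima_blockCode :
    HasIncreasingMinima (blockCode x) (fun n => Nat.pair n 0) where
  strictMono _ _ h := Nat.pair_lt_pair_left 0 h
  isLeast n := by
    refine ⟨decide_eq_true (blockIndex_pair_zero x n), fun k hk => ?_⟩
    obtain rfl : blockIndex x k = n := of_decide_eq_true hk
    exact pair_blockIndex_zero_le x k

theorem blockCode_mem_CSset : blockCode x ∈ CSset :=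
  mem_CSset_iff.2 ⟨⟨_, hasIncreasingMinima_blockCode x⟩, fun k =>
    ⟨blockIndex x k, decide_eq_true rfl, fun _ hn => (of_decide_eq_true hn).symm⟩⟩

theorem measurable_blockCode : Measurable blockCode := by
  refine measurable_pi_iff.2 fun n => measurable_pi_iff.2 fun k => ?_
  suffices h : Measurable fun x => blockIndex x k from
    (measurable_of_countable fun i => decide (i = n)).comp h
  obtain ⟨i, j, rfl⟩ : ∃ i j, Nat.pair i j = k := ⟨_, _, Nat.pair_unpair k⟩
  cases j with
  | zero => simp only [blockIndex_pair_zero, measurable_const]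
  | succ m =>
    simp only [blockIndex_pair_succ]
    exact (measurable_of_countable fun b => bif b then i else 0).comp (by fun_prop)

theorem blockCode_pair_zero (n i : ℕ) : blockCode x n (Nat.pair i 0) = decide (i = n) := by
  rw [blockCode, blockIndex_pair_zero]

theorem blockCode_pair_succ {n : ℕ} (hn : n ≠ 0) (i m : ℕ) :
    blockCode x n (Nat.pair i (m + 1)) = (decide (i = n) && x n m) := by
  rw [blockCode, blockIndex_pair_succ]
  by_cases hin : i = n
  · subst hin
    cases x i m <;> simp [hn.symm]
  · cases x i m <;> simp [hin, hn.symm]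

variable {x} {y : ℕ → ℕ → Bool}

theorem blockCode_row_eq_iff {n : ℕ} (hn : n ≠ 0) :
    blockCode x n = blockCode y n ↔ x n = y n := by
  constructor
  · intro h
    funext m
    simpa [blockCode_pair_succ _ hn] using congrFun h (Nat.pair n (m + 1))
  · intro h
    funext k
    obtain ⟨i, j, rfl⟩ : ∃ i j, Nat.pair i j = k := ⟨_, _, Nat.pair_unpair k⟩
    cases j <;> simp [blockCode_pair_zero, blockCode_pair_succ _ hn, h]

theorem E1_iff_E1_blockCode : E1 x y ↔ E1 (blockCode x) (blockCode y) := by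
  rw [E1_iff_eventuallyEq, E1_iff_eventuallyEq]
  refine eventually_congr ?_
  filter_upwards [eventually_ne_atTop 0] with n hn using (blockCode_row_eq_iff hn).symm

theorem E1_blockCode_iff_E1tail_blockCode :
    E1 (blockCode x) (blockCode y) ↔ E1tail (blockCode x) (blockCode y) := by
  refine ⟨fun ⟨n₀, h⟩ => ⟨n₀, n₀, h⟩, fun h => ?_⟩
  obtain ⟨a, b, hab⟩ := E1tail_iff_exists_forall_add_eq.1 h
  have hpair : Nat.pair a 0 = Nat.pair b 0 :=
    (hasIncreasingMinima_blockCode x).eq_of_row_eq (hasIncreasingMinima_blockCode y) (hab 0)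
  obtain rfl : a = b := (Nat.pair_eq_pair.1 hpair).1
  exact ⟨a, fun n => congrFun (hab n)⟩

end BlockCode

theorem E1_bireducible_E1tail_on_CS_general {S : Set (ℕ → ℕ → Bool)} (hCS : CSset ⊆ S)
    (hS : ∀ x ∈ S, ∃ s, HasIncreasingMinima x s) :
    (∃ f : S → (ℕ → ℕ → Bool), Measurable f ∧
      ∀ x x' : S, (E1tail x.1 x'.1 ↔ E1 (f x) (f x'))) ∧
    (∃ g : (ℕ → ℕ → Bool) → S, Measurable g ∧
      ∀ x y : ℕ → ℕ → Bool, (E1 x y ↔ E1tail (g x).1 (g y).1)) := by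
  constructor
  · refine ⟨fun x => placeByMin x, measurable_placeByMin.comp measurable_subtype_coe,
      fun x x' => ?_⟩
    obtain ⟨s, hs⟩ := hS x x.2
    obtain ⟨s', hs'⟩ := hS x' x'.2
    exact hs.E1tail_iff_E1_placeByMin hs'
  · exact ⟨fun x => ⟨blockCode x, hCS (blockCode_mem_CSset x)⟩, measurable_blockCode.subtype_mk,
      fun _ _ => E1_iff_E1_blockCode.trans E1_blockCode_iff_E1tail_blockCode⟩

/-- Lemma 4.1: `(2^{ℕ×ℕ}, E₁)` and `(𝓒𝓢, E₁^tail)` are Borel bireducible. -/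
theorem E1_bireducible_E1tail_on_CS :
    (∃ f : ↥CSset → (ℕ → ℕ → Bool), Measurable f ∧
      ∀ x x' : ↥CSset, (E1tail x.1 x'.1 ↔ E1 (f x) (f x'))) ∧
    (∃ g : (ℕ → ℕ → Bool) → ↥CSset, Measurable g ∧
      ∀ x y : ℕ → ℕ → Bool, (E1 x y ↔ E1tail (g x).1 (g y).1)) :=
  E1_bireducible_E1tail_on_CS_general Subset.rfl fun _ hx => (mem_CSset_iff.1 hx).1
end

section
/- Let D ∈ 𝓔_∞. Then (𝓔_∞, E_1^tail) is Borel isomorphic to (E_1^tail restricted to [∅,D]): there exists a Borel bijection f : 𝓔_∞ → [∅,D] = {B ∈ 𝓔_∞ : B ≤ D} such that for all A, A' ∈ 𝓔_∞, A E_1^tail A' if and only if f(A) E_1^tail f(A'). -/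
open Classical

open Einf

/-- The `n`-th equivalence class of `A ∈ 𝓔_∞` (in the order of least elements):
the `A`-class of `μ_n(A)`. -/
noncomputable def Eclass (A : Einf) (n : ℕ) : Set ℕ := {m | A.1 m (A.mu n)}

/-- `E₁^tail` on `𝓔_∞` (under the identification with `𝓒𝓢`): `A E₁^tail A'` iff there are
`n, n'` such that for all `j` the `(n+j)`-th class of `A` equals the `(n'+j)`-th class of `A'`. -/
noncomputable def E1tailE (A A' : Einf) : Prop :=
  ∃ n n' : ℕ, ∀ j : ℕ, Eclass A (n + j) = Eclass A' (n' + j)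

/-!
Numbering the `D`-classes by their least elements gives a surjection `D.index : ℕ → ℕ` whose
fibres are the `D`-classes, with the increasing section `D.mu`. The coarsenings of `D` are therefore
exactly the pullbacks along `D.index` of partitions of `ℕ`. Because `D.mu` is increasing, pulling
back does not change the order in which the classes are listed: the `n`-th class of the pullback of
`A` is the preimage of the `n`-th class of `A`. Taking preimages under a surjection is injective, so
equality of classes, and with it `E₁^tail`, is preserved in both directions. The coordinates of the
pullback in `2^{ℕ×ℕ}` are coordinates of `A` and conversely, so both directions are Borel.
-/

lemma infinite_quotient_comap {α β : Type*} {r : Setoid β} [Infinite (Quotient r)] {f : α → β}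
    (hf : ∀ b, ∃ a, r b (f a)) : Infinite (Quotient (r.comap f)) := by
  refine Infinite.of_surjective (β := Quotient r) (Quotient.map f fun _ _ h => h) ?_
  refine Quotient.ind fun b => ?_
  obtain ⟨a, hba⟩ := hf b
  exact ⟨Quotient.mk _ a, Quotient.sound (r.symm hba)⟩

namespace Einf

/-- `μ(A)`: the set of least elements of `A`-classes, so that `A.mu` is its increasing
enumeration. -/
def leastReps (A : Einf) : Set ℕ := {k | ∀ m, A.1 m k → k ≤ m}

lemma exists_leastReps_rel (A : Einf) (m : ℕ) : ∃ k ∈ A.leastReps, A.1 m k := by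
  have hm : ∃ k, A.1 m k := ⟨m, A.1.refl m⟩
  have hfind : A.1 m (Nat.find hm) := Nat.find_spec hm
  exact ⟨Nat.find hm, fun _ hj => Nat.find_min' hm (A.1.trans hfind (A.1.symm hj)), hfind⟩

lemma infinite_leastReps (A : Einf) : A.leastReps.Infinite := by
  have := A.2
  refine Set.infinite_coe_iff.1 <|
    Infinite.of_surjective (fun k : A.leastReps => Quotient.mk A.1 k) (Quotient.ind fun m => ?_)
  obtain ⟨k, hk, hmk⟩ := A.exists_leastReps_rel m
  exact ⟨⟨k, hk⟩, Quotient.sound (A.1.symm hmk)⟩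

lemma strictMono_mu (A : Einf) : StrictMono A.mu := Nat.nth_strictMono A.infinite_leastReps

lemma range_mu (A : Einf) : Set.range A.mu = A.leastReps :=
  Nat.range_nth_of_infinite A.infinite_leastReps

lemma mu_le_of_rel (A : Einf) {m n : ℕ} (h : A.1 m (A.mu n)) : A.mu n ≤ m :=
  Nat.nth_mem_of_infinite A.infinite_leastReps n m h

lemma exists_rel_mu (A : Einf) (m : ℕ) : ∃ n, A.1 m (A.mu n) := by
  obtain ⟨k, hk, hmk⟩ := A.exists_leastReps_rel m
  rw [← A.range_mu] at hk
  obtain ⟨n, rfl⟩ := hk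
  exact ⟨n, hmk⟩

lemma mu_rel_mu_iff (A : Einf) {n k : ℕ} : A.1 (A.mu n) (A.mu k) ↔ n = k := by
  refine ⟨fun h => ?_, fun h => h ▸ A.1.refl _⟩
  exact A.strictMono_mu.injective
    (le_antisymm (A.mu_le_of_rel (A.1.symm h)) (A.mu_le_of_rel h))

lemma mu_eq_of_strictMono (A : Einf) {f : ℕ → ℕ} (hf : StrictMono f)
    (hleast : ∀ n, f n ∈ A.leastReps) (hex : ∀ m, ∃ n, A.1 m (f n)) : A.mu = f := by
  refine (A.strictMono_mu.range_inj hf).1 (A.range_mu.trans (Set.Subset.antisymm ?_ ?_))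
  · intro k hk
    obtain ⟨n, hkn⟩ := hex k
    exact ⟨n, le_antisymm (hleast n k hkn) (hk (f n) (A.1.symm hkn))⟩
  · exact Set.range_subset_iff.2 hleast

/-- The index of the `A`-class of `m` when the classes are listed in the order of their least
elements; this encodes the quotient map `ℕ → ℕ/A` as a map `ℕ → ℕ`. -/
noncomputable def index (A : Einf) (m : ℕ) : ℕ := Classical.choose (A.exists_rel_mu m)

lemma rel_mu_index (A : Einf) (m : ℕ) : A.1 m (A.mu (A.index m)) :=
  Classical.choose_spec (A.exists_rel_mu m)

lemma mu_index_le (A : Einf) (m : ℕ) : A.mu (A.index m) ≤ m := A.mu_le_of_rel (A.rel_mu_index m)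

lemma index_mu (A : Einf) (n : ℕ) : A.index (A.mu n) = n :=
  (A.mu_rel_mu_iff.1 (A.rel_mu_index (A.mu n))).symm

lemma index_surjective (A : Einf) : Function.Surjective A.index := fun n => ⟨A.mu n, A.index_mu n⟩

lemma index_eq_of_rel (A : Einf) {i j : ℕ} (h : A.1 i j) : A.index i = A.index j :=
  A.mu_rel_mu_iff.1 <|
    A.1.trans (A.1.symm (A.rel_mu_index i)) (A.1.trans h (A.rel_mu_index j))

/-- The pullback of a partition `A` of the set of indices of `D`-classes to a coarsening of `D`. -/
noncomputable def pullback (D A : Einf) : Einf :=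
  ⟨A.1.comap D.index, haveI := A.2; infinite_quotient_comap fun n =>
    ⟨D.mu n, (D.index_mu n).symm ▸ A.1.refl n⟩⟩

lemma pullback_rel (D A : Einf) (i j : ℕ) :
    (pullback D A).1 i j ↔ A.1 (D.index i) (D.index j) := Iff.rfl

lemma coarsen_pullback (D A : Einf) : Coarsen (pullback D A) D := fun i j h => by
  rw [pullback_rel, D.index_eq_of_rel h]

/-- The partition of the set of indices of `D`-classes induced by a coarsening `B` of `D`; inverse
to `pullback D`. -/
noncomputable def descend (D B : Einf) (hB : Coarsen B D) : Einf :=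
  ⟨B.1.comap D.mu, haveI := B.2; infinite_quotient_comap fun m =>
    ⟨D.index m, hB _ _ (D.rel_mu_index m)⟩⟩

lemma descend_rel (D B : Einf) (hB : Coarsen B D) (i j : ℕ) :
    (descend D B hB).1 i j ↔ B.1 (D.mu i) (D.mu j) := Iff.rfl

lemma descend_pullback (D A : Einf) : descend D (pullback D A) (coarsen_pullback D A) = A :=
  Subtype.ext <| Setoid.ext fun i j => by
    rw [descend_rel, pullback_rel, index_mu, index_mu]

lemma pullback_descend (D B : Einf) (hB : Coarsen B D) : pullback D (descend D B hB) = B := by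
  have hrep (i : ℕ) : B.1 i (D.mu (D.index i)) := hB _ _ (D.rel_mu_index i)
  refine Subtype.ext <| Setoid.ext fun i j => ?_
  rw [pullback_rel, descend_rel]
  exact ⟨fun h => B.1.trans (hrep i) (B.1.trans h (B.1.symm (hrep j))),
    fun h => B.1.trans (B.1.symm (hrep i)) (B.1.trans h (hrep j))⟩

lemma mu_pullback (D A : Einf) : (pullback D A).mu = D.mu ∘ A.mu := by
  refine mu_eq_of_strictMono _ (D.strictMono_mu.comp A.strictMono_mu) ?_ ?_
  · intro n m hm
    rw [Function.comp_apply, pullback_rel, index_mu] at hm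
    calc D.mu (A.mu n) ≤ D.mu (D.index m) := D.strictMono_mu.monotone (A.mu_le_of_rel hm)
      _ ≤ m := D.mu_index_le m
  · intro m
    obtain ⟨n, hn⟩ := A.exists_rel_mu (D.index m)
    exact ⟨n, by rwa [Function.comp_apply, pullback_rel, index_mu]⟩

lemma pullback_rel_mu_iff (D A : Einf) (m n : ℕ) :
    (pullback D A).1 m ((pullback D A).mu n) ↔ A.1 (D.index m) (A.mu n) := by
  rw [mu_pullback, Function.comp_apply, pullback_rel, index_mu]

lemma Eclass_pullback (D A : Einf) (n : ℕ) :
    Eclass (pullback D A) n = D.index ⁻¹' Eclass A n :=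
  Set.ext fun m => pullback_rel_mu_iff D A m n

lemma E1tailE_pullback_iff (D A A' : Einf) :
    E1tailE (pullback D A) (pullback D A') ↔ E1tailE A A' := by
  simp only [E1tailE, Eclass_pullback, D.index_surjective.preimage_injective.eq_iff]

lemma toCS_pullback (D A : Einf) (n m : ℕ) : toCS (pullback D A) n m = toCS A n (D.index m) := by
  simp only [toCS, pullback_rel_mu_iff]

lemma toCS_descend (D B : Einf) (hB : Coarsen B D) (n m : ℕ) :
    toCS (descend D B hB) n m = toCS B n (D.mu m) := by
  conv_rhs => rw [← pullback_descend D B hB, toCS_pullback, index_mu]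

lemma measurable_iff_toCS {α : Type*} [MeasurableSpace α] {f : α → Einf} :
    Measurable f ↔ ∀ n m, Measurable fun x => toCS (f x) n m := by
  simp only [measurable_comap_iff, measurable_pi_iff, Function.comp_apply]

lemma measurable_toCS_apply (n m : ℕ) : Measurable fun A : Einf => toCS A n m :=
  measurable_iff_toCS.1 measurable_id n m

lemma measurable_pullback (D : Einf) : Measurable (pullback D) :=
  measurable_iff_toCS.2 fun n m => by
    simpa only [toCS_pullback] using measurable_toCS_apply n (D.index m)

lemma measurable_descend (D : Einf) :
    Measurable fun B : {B : Einf // Coarsen B D} => descend D B.1 B.2 :=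
  measurable_iff_toCS.2 fun n m => by
    simp only [toCS_descend]
    exact (measurable_toCS_apply n (D.mu m)).comp measurable_subtype_coe

/-- `pullback D` as a Borel isomorphism from `𝓔_∞` onto `[∅,D]`, the set of coarsenings of `D`. -/
noncomputable def pullbackEquiv (D : Einf) : Einf ≃ᵐ {B : Einf // Coarsen B D} where
  toFun A := ⟨pullback D A, coarsen_pullback D A⟩
  invFun B := descend D B.1 B.2
  left_inv := descend_pullback D
  right_inv B := Subtype.ext (pullback_descend D B.1 B.2)
  measurable_toFun := (measurable_pullback D).subtype_mk
  measurable_invFun := measurable_descend D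

end Einf

/-- Lemma 4.2: for every `D ∈ 𝓔_∞`, `(𝓔_∞, E₁^tail)` is Borel isomorphic to
`E₁^tail` restricted to `[∅,D] = {B : B ≤ D}`. -/
theorem E1tail_isomorphic_to_restriction (D : Einf) :
    ∃ f : Einf → {B : Einf // Coarsen B D}, Measurable f ∧ Function.Bijective f ∧
      ∀ A A' : Einf, (E1tailE A A' ↔ E1tailE (f A).1 (f A').1) := by
  exact ⟨pullbackEquiv D, (pullbackEquiv D).measurable, (pullbackEquiv D).bijective,
    fun A A' => (E1tailE_pullback_iff D A A').symm⟩
end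

section
/- Let f : 𝓔_∞ → 𝓔_∞ be a Borel map. Then there exists a Ramsey conull set 𝓓 ⊆ 𝓔_∞ such that for all B ∈ 𝓓 and all A ∈ 𝓔_∞ with A ≤ B, if f(A) ≤ B then f(A) ≤ A. -/
open Classical

open Einf

/-!
Numbering the classes of an infinite partition in the order of their least elements turns partitions
into rigid surjections of `ℕ`, and the coarsenings of `g` into the products `σ * g`. By the
Carlson–Simpson pigeonhole principle and fusion every Borel set is completely Ramsey, so after
coarsening `B` a Borel question about `A ≤ B` has an answer which depends only on how `A` joins
finitely many classes of `B`. To force `f A` to join two classes `a` and `b` of `B` which `A` joins,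
spend a later class `d` as a probe. If `f A` always joins `d` to `a` when `d` has been merged with
`a`, merge `d` with `b` instead: for the `A` which join `a` and `b` this is the same partition, so
`f A` joins `d` to `a`, and it joins `d` to `b` because `f A ≤ B`. If `f A` never joins `d` to `a`,
merging `d` with `a` makes `f A ≤ B` impossible. Fusion treats all pairs `a`, `b` at once.
-/

open Filter

/-- Rigid surjections of `ℕ`: an infinite partition of `ℕ` is encoded by the map sending `n` to the
index of its class, the classes being numbered in the order of their least elements. Composing with
a rigid surjection on the left coarsens the partition. -/
structure RigidSurj where
  toFun : ℕ → ℕ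
  exists_first' : ∀ y, ∃ n, toFun n = y ∧ ∀ i < n, toFun i < y

namespace RigidSurj

instance : FunLike RigidSurj ℕ ℕ where
  coe := toFun
  coe_injective := by rintro ⟨_, _⟩ ⟨_, _⟩ rfl; rfl

@[ext] theorem ext {σ τ : RigidSurj} (h : ∀ n, σ n = τ n) : σ = τ := DFunLike.ext _ _ h

/-- The least element of the class of index `y`. -/
noncomputable def first (σ : RigidSurj) (y : ℕ) : ℕ := (σ.exists_first' y).choose

@[simp] theorem apply_first (σ : RigidSurj) (y : ℕ) : σ (first σ y) = y :=
  (σ.exists_first' y).choose_spec.1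

theorem lt_of_lt_first {σ : RigidSurj} {y i : ℕ} (h : i < first σ y) : σ i < y :=
  (σ.exists_first' y).choose_spec.2 i h

theorem apply_le_of_le_first {σ : RigidSurj} {y i : ℕ} (h : i ≤ first σ y) : σ i ≤ y := by
  rcases h.lt_or_eq with hlt | rfl
  · exact (lt_of_lt_first hlt).le
  · exact (apply_first σ y).le

theorem first_eq {σ : RigidSurj} {y n : ℕ} (h : σ n = y) (h' : ∀ i < n, σ i < y) :
    first σ y = n := by
  rcases lt_trichotomy (first σ y) n with hlt | heq | hgt
  · exact absurd (h' _ hlt) (by simp)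
  · exact heq
  · exact absurd (lt_of_lt_first hgt) (by simp [h])

theorem first_apply_le (σ : RigidSurj) (n : ℕ) : first σ (σ n) ≤ n :=
  not_lt.1 fun h => (lt_of_lt_first h).false

theorem first_strictMono (σ : RigidSurj) : StrictMono (first σ) := by
  intro y z hyz
  by_contra! h
  rcases h.lt_or_eq with hlt | heq
  · exact hyz.not_gt (by simpa using lt_of_lt_first hlt)
  · exact hyz.ne (by simpa using congrArg σ heq.symm)

theorem le_first (σ : RigidSurj) (y : ℕ) : y ≤ first σ y := (first_strictMono σ).le_apply

theorem apply_le (σ : RigidSurj) (n : ℕ) : σ n ≤ n := (le_first σ _).trans (first_apply_le σ n)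

noncomputable instance : Monoid RigidSurj where
  one := ⟨id, fun y => ⟨y, rfl, fun _ h => h⟩⟩
  mul σ τ := ⟨fun n => σ (τ n), fun y => ⟨first τ (first σ y), by simp,
    fun _ h => lt_of_lt_first (σ := σ) (lt_of_lt_first (σ := τ) h)⟩⟩
  mul_assoc _ _ _ := rfl
  one_mul _ := rfl
  mul_one _ := rfl

@[simp] theorem mul_apply (σ τ : RigidSurj) (n : ℕ) : (σ * τ) n = σ (τ n) := rfl

theorem first_mul (σ τ : RigidSurj) (y : ℕ) : first (σ * τ) y = first τ (first σ y) :=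
  first_eq (by simp) fun _ h => lt_of_lt_first (σ := σ) (lt_of_lt_first (σ := τ) h)

theorem exists_mul_eq_of_ker_le {g h : RigidSurj} (hgh : Setoid.ker h ≤ Setoid.ker g) :
    ∃ σ : RigidSurj, σ * h = g := by
  refine ⟨⟨fun x => g (first h x), fun y => ⟨h (first g y), ?_, fun i hi => ?_⟩⟩, ?_⟩
  · exact (hgh (apply_first h _)).trans (apply_first g y)
  · exact lt_of_lt_first <| (first_strictMono h hi).trans_le (first_apply_le h _)
  · ext n
    exact hgh (apply_first h _)

/-- The submonoid of the maps which are the identity below `k`: those which keep the first `k`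
classes apart, and so play the role of a finite approximation with `k` classes. -/
def fixing (k : ℕ) : Submonoid RigidSurj where
  carrier := {σ | ∀ i < k, σ i = i}
  one_mem' _ _ := rfl
  mul_mem' {σ τ} hσ hτ i hi := by rw [mul_apply, hτ i hi, hσ i hi]

theorem fixing_anti : Antitone fixing := fun _ _ h _ hσ i hi => hσ i (hi.trans_le h)

theorem mem_fixing_zero (σ : RigidSurj) : σ ∈ fixing 0 := fun _ h => (Nat.not_lt_zero _ h).elim

theorem first_of_mem_fixing {k : ℕ} {σ : RigidSurj} (hσ : σ ∈ fixing k) {i : ℕ} (hi : i < k) :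
    first σ i = i :=
  first_eq (hσ i hi) fun j hj => (hσ j (hj.trans hi)).trans_lt hj

theorem exists_mem_fixing_coe_eq {k : ℕ} {f : ℕ → ℕ} (hf : ∀ i < k, f i = i)
    (h : ∀ y ≥ k, ∃ n, f n = y ∧ ∀ i < n, f i < y) : ∃ σ ∈ fixing k, ⇑σ = f := by
  refine ⟨⟨f, fun y => ?_⟩, hf, rfl⟩
  rcases lt_or_ge y k with hy | hy
  · exact ⟨y, hf y hy, fun i hi => (hf i (hi.trans hy)).trans_lt hi⟩
  · exact h y hy

/-- The number of classes meeting `{0, …, d - 1}`. -/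
noncomputable def height (σ : RigidSurj) (d : ℕ) : ℕ := (Finset.range d).sup fun i => σ i + 1

theorem lt_height_iff {σ : RigidSurj} {y d : ℕ} : y < height σ d ↔ first σ y < d := by
  simp only [height, Finset.lt_sup_iff, Finset.mem_range, Nat.lt_succ_iff]
  constructor
  · rintro ⟨i, hi, hy⟩
    exact ((first_strictMono σ).monotone hy).trans_lt ((first_apply_le σ i).trans_lt hi)
  · exact fun h => ⟨first σ y, h, (apply_first σ y).ge⟩

theorem height_le_iff {σ : RigidSurj} {y d : ℕ} : height σ d ≤ y ↔ d ≤ first σ y := by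
  simpa using lt_height_iff.not

theorem apply_lt_height {σ : RigidSurj} {i d : ℕ} (h : i < d) : σ i < height σ d :=
  lt_height_iff.2 ((first_apply_le σ i).trans_lt h)

theorem height_first (σ : RigidSurj) (y : ℕ) : height σ (first σ y) = y :=
  eq_of_forall_lt_iff fun _ => lt_height_iff.trans (first_strictMono σ).lt_iff_lt

theorem height_first_succ (σ : RigidSurj) (y : ℕ) : height σ (first σ y + 1) = y + 1 :=
  eq_of_forall_lt_iff fun _ => lt_height_iff.trans <| by
    rw [Nat.lt_succ_iff, Nat.lt_succ_iff, (first_strictMono σ).le_iff_le]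

theorem height_congr {σ τ : RigidSurj} {d : ℕ} (h : Set.EqOn σ τ (Set.Iio d)) :
    height σ d = height τ d :=
  Finset.sup_congr rfl fun i hi => by rw [h (Finset.mem_range.1 hi)]

theorem height_succ (σ : RigidSurj) (d : ℕ) :
    height σ (d + 1) = height σ d ∨ height σ (d + 1) = height σ d + 1 := by
  have hmono : height σ d ≤ height σ (d + 1) :=
    Finset.sup_mono (Finset.range_mono (Nat.le_succ d))
  have hle : height σ (d + 1) ≤ height σ d + 1 := height_le_iff.2 <|
    (height_le_iff.1 le_rfl).trans_lt (first_strictMono σ (Nat.lt_succ_self _))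
  lia

theorem height_of_mem_fixing {k : ℕ} {σ : RigidSurj} (hσ : σ ∈ fixing k) : height σ k = k :=
  eq_of_forall_lt_iff fun y => lt_height_iff.trans
    ⟨(le_first σ y).trans_lt, fun h => (first_of_mem_fixing hσ h).trans_lt h⟩

/-- The finest rigid surjection agreeing with `σ` below `d`. -/
noncomputable def stem (σ : RigidSurj) (d : ℕ) : RigidSurj where
  toFun x := if x < d then σ x else height σ d + (x - d)
  exists_first' y := by
    rcases lt_or_ge y (height σ d) with hy | hy
    · have hd := lt_height_iff.1 hy
      refine ⟨first σ y, by simp [hd], fun i hi => ?_⟩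
      simpa [hi.trans hd] using lt_of_lt_first hi
    · refine ⟨d + (y - height σ d), by simp [hy], fun i hi => ?_⟩
      split_ifs with hid
      · exact (apply_lt_height hid).trans_le hy
      · lia

theorem stem_apply_of_lt (σ : RigidSurj) {d x : ℕ} (h : x < d) : stem σ d x = σ x := if_pos h

theorem stem_apply_of_ge (σ : RigidSurj) {d x : ℕ} (h : d ≤ x) :
    stem σ d x = height σ d + (x - d) :=
  if_neg h.not_gt

theorem stem_congr {σ τ : RigidSurj} {d : ℕ} (h : Set.EqOn σ τ (Set.Iio d)) :
    stem σ d = stem τ d := by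
  ext x
  rcases lt_or_ge x d with hx | hx
  · rw [stem_apply_of_lt σ hx, stem_apply_of_lt τ hx, h hx]
  · rw [stem_apply_of_ge σ hx, stem_apply_of_ge τ hx, height_congr h]

theorem first_stem_apply_of_ge (σ : RigidSurj) {d x : ℕ} (h : d ≤ x) :
    first (stem σ d) (stem σ d x) = x := by
  refine first_eq rfl fun i hi => ?_
  rw [stem_apply_of_ge σ h]
  rcases lt_or_ge i d with hid | hid
  · rw [stem_apply_of_lt σ hid]
    exact (apply_lt_height hid).trans_le (Nat.le_add_right _ _)
  · rw [stem_apply_of_ge σ hid]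
    lia

theorem exists_mul_stem (σ : RigidSurj) (d : ℕ) :
    ∃ s ∈ fixing (height σ d), s * stem σ d = σ := by
  have hker : Setoid.ker (stem σ d) ≤ Setoid.ker σ := by
    intro x y (hxy : stem σ d x = stem σ d y)
    change σ x = σ y
    rcases lt_or_ge x d with hx | hx <;> rcases lt_or_ge y d with hy | hy
    · rwa [stem_apply_of_lt σ hx, stem_apply_of_lt σ hy] at hxy
    · rw [stem_apply_of_lt σ hx, stem_apply_of_ge σ hy] at hxy
      exact absurd (apply_lt_height (σ := σ) hx) (by lia)
    · rw [stem_apply_of_ge σ hx, stem_apply_of_lt σ hy] at hxy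
      exact absurd (apply_lt_height (σ := σ) hy) (by lia)
    · rw [← first_stem_apply_of_ge σ hx, hxy, first_stem_apply_of_ge σ hy]
  obtain ⟨s, hs⟩ := exists_mul_eq_of_ker_le hker
  refine ⟨s, fun y hy => ?_, hs⟩
  have h := DFunLike.congr_fun hs (first σ y)
  rwa [mul_apply, stem_apply_of_lt σ (lt_height_iff.1 hy), apply_first] at h

theorem exists_mul_stem_of_eqOn {σ σ₀ : RigidSurj} {d : ℕ} (h : Set.EqOn σ σ₀ (Set.Iio d)) :
    ∃ s ∈ fixing (height σ₀ d), s * stem σ₀ d = σ := by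
  rw [← height_congr h, ← stem_congr h]
  exact exists_mul_stem σ d

theorem exists_stem_mul_eq (σ : RigidSurj) (d : ℕ) {τ' : RigidSurj}
    (hτ' : τ' ∈ fixing (height σ d)) : ∃ τ ∈ fixing d, stem σ d * τ = τ' * stem σ d := by
  have hlow {x : ℕ} (hx : x < d) : τ' (stem σ d x) = stem σ d x :=
    hτ' _ (by rw [stem_apply_of_lt σ hx]; exact apply_lt_height hx)
  obtain ⟨τ, hτ, hτ_eq⟩ := exists_mem_fixing_coe_eq
    (k := d) (f := fun x => if x < d then x else first (stem σ d) (τ' (stem σ d x)))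
    (fun i hi => if_pos hi) fun y hy => by
      have hn : d ≤ first (τ' * stem σ d) (stem σ d y) := by
        by_contra! h
        have heq := apply_first (τ' * stem σ d) (stem σ d y)
        rw [mul_apply, hlow h, stem_apply_of_lt σ h] at heq
        refine (apply_lt_height (σ := σ) h).not_ge ?_
        rw [heq, stem_apply_of_ge σ hy]
        exact Nat.le_add_right _ _
      refine ⟨first (τ' * stem σ d) (stem σ d y), ?_, fun i hi => ?_⟩
      · rw [if_neg hn.not_gt, ← mul_apply, apply_first, first_stem_apply_of_ge σ hy]
      · split_ifs with hid
        · exact hid.trans_le hy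
        · rw [← first_stem_apply_of_ge σ hy]
          exact first_strictMono _ (lt_of_lt_first (σ := τ' * stem σ d) hi)
  refine ⟨τ, hτ, ?_⟩
  ext x
  rw [mul_apply, mul_apply, hτ_eq]
  dsimp only
  split_ifs with hx
  · exact (hlow hx).symm
  · exact apply_first _ _

theorem exists_forall_eqOn_mul_eq (σ₀ : RigidSurj) (d : ℕ) {τ' : RigidSurj}
    (hτ' : τ' ∈ fixing (height σ₀ d)) :
    ∃ τ ∈ fixing d, ∀ σ : RigidSurj, Set.EqOn σ σ₀ (Set.Iio d) →
      ∃ s ∈ fixing (height σ₀ d), σ * τ = s * (τ' * stem σ₀ d) := by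
  obtain ⟨τ, hτ, h⟩ := exists_stem_mul_eq σ₀ d hτ'
  refine ⟨τ, hτ, fun σ hσ => ?_⟩
  obtain ⟨s, hs, rfl⟩ := exists_mul_stem_of_eqOn hσ
  exact ⟨s, hs, by rw [mul_assoc, h]⟩

end RigidSurj

/-! ### Fusion -/

/-- `Q` is dense and open for the preorder in which `s * x` extends `x` for every `s ∈ S`. -/
structure IsDenseOpen {M : Type*} [Monoid M] (S : Submonoid M) (Q : Set M) : Prop where
  dense : ∀ x, ∃ s ∈ S, s * x ∈ Q
  mul_mem : ∀ s ∈ S, ∀ x ∈ Q, s * x ∈ Q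

namespace IsDenseOpen

variable {M : Type*} [Monoid M] {S : Submonoid M}

theorem univ : IsDenseOpen S Set.univ := ⟨fun _ => ⟨1, S.one_mem, trivial⟩, fun _ _ _ _ => trivial⟩

theorem inter {Q R : Set M} (hQ : IsDenseOpen S Q) (hR : IsDenseOpen S R) :
    IsDenseOpen S (Q ∩ R) where
  dense x := by
    obtain ⟨s, hs, hsQ⟩ := hQ.dense x
    obtain ⟨t, ht, htR⟩ := hR.dense (s * x)
    exact ⟨t * s, S.mul_mem ht hs, by rw [mul_assoc]; exact ⟨hQ.mul_mem t ht _ hsQ, htR⟩⟩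
  mul_mem s hs x hx := ⟨hQ.mul_mem s hs x hx.1, hR.mul_mem s hs x hx.2⟩

theorem iInter {ι : Type*} [Finite ι] {Q : ι → Set M} (h : ∀ i, IsDenseOpen S (Q i)) :
    IsDenseOpen S (⋂ i, Q i) := by
  suffices ∀ t : Set ι, t.Finite → IsDenseOpen S (⋂ i ∈ t, Q i) by
    simpa using this Set.univ Set.finite_univ
  intro t ht
  induction t, ht using Set.Finite.induction_on with
  | empty => simpa using univ
  | insert _ _ ih =>
    rw [Set.biInter_insert]
    exact (h _).inter ih

theorem preimage_mul_right {Q : Set M} (hQ : IsDenseOpen S Q) (b : M) :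
    IsDenseOpen S ((· * b) ⁻¹' Q) where
  dense x := by simpa only [Set.mem_preimage, mul_assoc] using hQ.dense (x * b)
  mul_mem s hs x hx := by
    simpa only [Set.mem_preimage, mul_assoc] using hQ.mul_mem s hs (x * b) hx

end IsDenseOpen

namespace RigidSurj

theorem exists_limit {k : ℕ} {T : ℕ → RigidSurj}
    (hT : ∀ n, ∃ t ∈ fixing (k + n), T (n + 1) = t * T n) :
    ∃ L : RigidSurj, ∀ n, ∃ σ ∈ fixing (k + n), L = σ * T n := by
  have hfactor {n m : ℕ} (hnm : n ≤ m) : ∃ t ∈ fixing (k + n), T m = t * T n := by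
    induction m, hnm using Nat.le_induction with
    | base => exact ⟨1, one_mem _, rfl⟩
    | succ m hm ih =>
      obtain ⟨t, ht, hTm⟩ := ih
      obtain ⟨u, hu, hTm'⟩ := hT m
      exact ⟨u * t, mul_mem (fixing_anti (by lia) hu) ht, by rw [hTm', hTm, mul_assoc]⟩
  have hstable {n m i : ℕ} (hi : T n i < k + n) (hnm : n ≤ m) : T m i = T n i := by
    obtain ⟨t, ht, hTm⟩ := hfactor hnm
    rw [hTm, mul_apply, ht _ hi]
  have hdiag {m i : ℕ} (him : i < m) : T m i = T (i + 1) i :=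
    hstable (((T _).apply_le i).trans_lt (by lia)) him
  have hlim {n i : ℕ} (hi : T n i < k + n) : T (i + 1) i = T n i := by
    rw [← hdiag (m := max n (i + 1)) (by lia), hstable hi (le_max_left _ _)]
  let L : RigidSurj := ⟨fun i => T (i + 1) i, fun y => by
    refine ⟨first (T (y + 1)) y, ?_, fun i hi => ?_⟩
    · rw [hlim (n := y + 1) (by rw [apply_first]; lia), apply_first]
    · have := lt_of_lt_first hi
      rwa [hlim (n := y + 1) (by lia)]⟩
  refine ⟨L, fun n => ?_⟩
  have hker : Setoid.ker (T n) ≤ Setoid.ker L := by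
    intro i j (hij : T n i = T n j)
    change T (i + 1) i = T (j + 1) j
    obtain ⟨t, -, ht⟩ := hfactor (le_max_left n (max (i + 1) (j + 1)))
    rw [← hdiag (m := max n (max (i + 1) (j + 1))) (i := i) (by lia),
      ← hdiag (m := max n (max (i + 1) (j + 1))) (i := j) (by lia), ht, mul_apply, mul_apply, hij]
  obtain ⟨σ, hσ⟩ := exists_mul_eq_of_ker_le hker
  refine ⟨σ, fun y hy => ?_, hσ.symm⟩
  have h := DFunLike.congr_fun hσ (first (T n) y)
  rw [mul_apply, apply_first] at h
  rw [h]
  exact (hlim (by rwa [apply_first])).trans (apply_first _ _)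

theorem exists_fusion {k : ℕ} {Q : ℕ → Set RigidSurj}
    (hQ : ∀ d ≥ k, IsDenseOpen (fixing d) (Q d)) : ∃ T ∈ fixing k, ∀ d ≥ k, T ∈ Q d := by
  choose t ht htQ using fun n => (hQ (k + n) (Nat.le_add_right k n)).dense
  let T : ℕ → RigidSurj := fun n => Nat.rec 1 (fun n x => t n x * x) n
  obtain ⟨L, hL⟩ := exists_limit (k := k) (T := T) fun n => ⟨t n (T n), ht n _, rfl⟩
  refine ⟨L, ?_, fun d hd => ?_⟩
  · obtain ⟨σ, hσ, hLσ⟩ := hL 0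
    exact hLσ ▸ hσ
  · obtain ⟨n, rfl⟩ := Nat.exists_eq_add_of_le hd
    obtain ⟨σ, hσ, hLσ⟩ := hL (n + 1)
    exact hLσ ▸ (hQ _ hd).mul_mem σ (fixing_anti (Nat.le_succ _) hσ) _ (htQ n (T n))

/- Below `d`, a rigid surjection takes only finitely many patterns of values. -/
theorem isDenseOpen_setOf_forall {d : ℕ} {P : RigidSurj → RigidSurj → Prop}
    (hdense : ∀ σ₀ T : RigidSurj, ∃ τ ∈ fixing d,
      ∀ σ : RigidSurj, Set.EqOn σ σ₀ (Set.Iio d) → P σ (τ * T))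
    (hmul : ∀ σ T, ∀ τ ∈ fixing d, P (σ * τ) T → P σ (τ * T)) :
    IsDenseOpen (fixing d) {T | ∀ σ, P σ T} := by
  have hpattern (u : Fin d → Fin d) :
      IsDenseOpen (fixing d) {T | ∀ σ : RigidSurj, (∀ i : Fin d, σ i = u i) → P σ T} := by
    refine ⟨fun T => ?_, fun τ hτ T hT σ hσ => hmul σ T τ hτ (hT _ fun i => ?_)⟩
    · by_cases h : ∃ σ₀ : RigidSurj, ∀ i : Fin d, σ₀ i = u i
      · obtain ⟨σ₀, hσ₀⟩ := h
        obtain ⟨τ, hτ, hP⟩ := hdense σ₀ T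
        exact ⟨τ, hτ, fun σ hσ => hP σ fun i hi => (hσ ⟨i, hi⟩).trans (hσ₀ ⟨i, hi⟩).symm⟩
      · exact ⟨1, one_mem _, fun σ hσ => (h ⟨σ, hσ⟩).elim⟩
    · rw [mul_apply, hτ i i.2, hσ]
  convert IsDenseOpen.iInter hpattern
  ext T
  simp only [Set.mem_ofPred_eq, Set.mem_iInter]
  exact ⟨fun h _ σ _ => h σ,
    fun h σ => h (fun i => ⟨σ i, (apply_le σ i).trans_lt i.2⟩) σ fun _ => rfl⟩

theorem exists_fusion_forall_mul {k : ℕ} {Q : ℕ → Set RigidSurj}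
    (hQ : ∀ m ≥ k, IsDenseOpen (fixing m) (Q m)) :
    ∃ T ∈ fixing k, ∀ m ≥ k, ∀ σ : RigidSurj, σ * T ∈ Q m := by
  have hlevel (d : ℕ) : IsDenseOpen (fixing d)
      {T | ∀ σ : RigidSurj, k ≤ height σ d → σ * T ∈ Q (height σ d)} := by
    refine isDenseOpen_setOf_forall (fun σ₀ T => ?_) fun σ T τ hτ h hk => ?_
    · rcases lt_or_ge (height σ₀ d) k with hk | hk
      · exact ⟨1, one_mem _, fun σ hσ h => absurd (height_congr hσ ▸ h) hk.not_ge⟩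
      · obtain ⟨τ', hτ', hQτ'⟩ := (hQ _ hk).dense (stem σ₀ d * T)
        obtain ⟨τ, hτ, hfactor⟩ := exists_forall_eqOn_mul_eq σ₀ d hτ'
        refine ⟨τ, hτ, fun σ hσ _ => ?_⟩
        obtain ⟨s, hs, hst⟩ := hfactor σ hσ
        rw [height_congr hσ, ← mul_assoc, hst, mul_assoc, mul_assoc]
        exact (hQ _ hk).mul_mem s hs _ hQτ'
    · have hheight : height (σ * τ) d = height σ d :=
        height_congr fun i hi => by rw [mul_apply, hτ i hi]
      rw [hheight, mul_assoc] at h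
      exact h hk
  obtain ⟨T, hT, hTQ⟩ := exists_fusion fun d (_ : d ≥ k) => hlevel d
  refine ⟨T, hT, fun m hm σ => ?_⟩
  simpa only [height_first] using hTQ (first σ m) (hm.trans (le_first σ m)) σ
    ((height_first σ m).symm ▸ hm)

end RigidSurj
/-! ### The Carlson–Simpson pigeonhole principle -/

theorem exists_forall_exists_mul_mul_eq {M : Type*} [Semigroup M] [Nonempty M] [TopologicalSpace M]
    [CompactSpace M] [T2Space M] (hM : ∀ r : M, Continuous (· * r)) :
    ∃ p : M, ∀ x, ∃ y, y * (x * p) = p := by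
  have hsub {a b : M} (h : b ∈ Set.range (· * a)) : Set.range (· * b) ⊆ Set.range (· * a) := by
    obtain ⟨y, rfl⟩ := h
    rintro _ ⟨z, rfl⟩
    exact ⟨z * y, mul_assoc z y a⟩
  have hchain (c : Set M) (hc : IsChain (fun a b => b ∈ Set.range (· * a)) c) :
      ∃ ub, ∀ a ∈ c, ub ∈ Set.range (· * a) := by
    rcases c.eq_empty_or_nonempty with rfl | hne
    · exact ⟨Classical.arbitrary M, by simp⟩
    have : Nonempty c := hne.to_subtype
    have hdir : Directed (· ⊇ ·) fun a : c => Set.range (· * (a : M)) := fun a b => by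
      rcases eq_or_ne a b with rfl | hab
      · exact ⟨a, subset_rfl, subset_rfl⟩
      · rcases hc a.2 b.2 (Subtype.coe_injective.ne hab) with h | h
        · exact ⟨b, hsub h, subset_rfl⟩
        · exact ⟨a, subset_rfl, hsub h⟩
    obtain ⟨ub, hub⟩ := IsCompact.nonempty_iInter_of_directed_nonempty_isCompact_isClosed _ hdir
      (fun a => Set.range_nonempty _) (fun a => isCompact_range (hM a))
      fun a => (isCompact_range (hM a)).isClosed
    exact ⟨ub, fun a ha => Set.mem_iInter.1 hub ⟨a, ha⟩⟩
  obtain ⟨p, hp⟩ := exists_maximal_of_chains_bounded hchain fun hab hbc => hsub hab hbc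
  exact ⟨p, fun x => hp (x * p) ⟨x, rfl⟩⟩

section Words

attribute [local instance] Ultrafilter.mul Ultrafilter.semigroup

theorem ultrafilter_map_mul {M N : Type*} [Monoid M] [Monoid N] (θ : M →* N)
    (U V : Ultrafilter M) : (U * V).map θ = U.map θ * V.map θ := by
  refine Ultrafilter.coe_inj.1 (Filter.ext' fun p => ?_)
  simp only [Ultrafilter.eventually_mul, Ultrafilter.coe_map, eventually_map, map_mul]

variable {α : Type*}

/-- Words over `Option α` are words over `α` with a variable `none`; `subst a` replaces the
variable by the letter `a`. -/
def subst (a : α) : FreeMonoid (Option α) →* FreeMonoid α := FreeMonoid.map fun o => o.getD a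

/-- The words beginning with the variable. -/
def variableWords (α : Type*) : Set (FreeMonoid (Option α)) :=
  Set.range (FreeMonoid.of none * ·)

theorem mul_mem_variableWords {x : FreeMonoid (Option α)} (hx : x ∈ variableWords α)
    (y : FreeMonoid (Option α)) : x * y ∈ variableWords α := by
  obtain ⟨t, rfl⟩ := hx
  exact ⟨t * y, (mul_assoc _ t y).symm⟩

theorem subst_map_some (a : α) (w : FreeMonoid α) : subst a (FreeMonoid.map some w) = w := by
  rw [subst, FreeMonoid.map_map]
  exact DFunLike.congr_fun FreeMonoid.map_id w

/- The ultrafilter is an idempotent in the left ideal generated by `p`, where `p` lies in a minimal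
left ideal of ultrafilters on constant words. Its substitutions are then idempotents of the same
minimal left ideal, so each is a right identity for the others. -/
theorem exists_ultrafilter_map_subst_mul (α : Type*) :
    ∃ q : Ultrafilter (FreeMonoid (Option α)), variableWords α ∈ q ∧
      ∀ a b : α, q.map (subst a) * q.map (subst b) = q.map (subst a) := by
  obtain ⟨p, hp⟩ := exists_forall_exists_mul_mul_eq
    (M := Ultrafilter (FreeMonoid α)) Ultrafilter.continuous_mul_left
  let K : Set (Ultrafilter (FreeMonoid (Option α))) := {X | variableWords α ∈ X}
  have hKmul : ∀ X ∈ K, ∀ Y, X * Y ∈ K := fun X hX Y =>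
    (Ultrafilter.eventually_mul _ _ _).2 <| Eventually.mono hX fun x hx =>
      Eventually.of_forall fun y => mul_mem_variableWords hx y
  have hKne : K.Nonempty := ⟨pure (FreeMonoid.of none), 1, mul_one _⟩
  obtain ⟨q, ⟨X, hX, rfl⟩, hq⟩ := exists_idempotent_in_compact_subsemigroup
    (M := Ultrafilter (FreeMonoid (Option α))) Ultrafilter.continuous_mul_left
    ((· * p.map (FreeMonoid.map some)) '' K) (hKne.image _)
    ((ultrafilter_isClosed_basic _).isCompact.image (Ultrafilter.continuous_mul_left _)) (by
      rintro _ ⟨X, hX, rfl⟩ _ ⟨Y, _, rfl⟩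
      exact ⟨X * p.map (FreeMonoid.map some) * Y, hKmul _ (hKmul X hX _) Y, mul_assoc _ _ _⟩)
  refine ⟨X * p.map (FreeMonoid.map some), hKmul X hX _, fun a b => ?_⟩
  have hmap (c : α) : (X * p.map (FreeMonoid.map some)).map (subst c) = X.map (subst c) * p := by
    have hid : subst c ∘ FreeMonoid.map some = id := funext (subst_map_some c)
    rw [ultrafilter_map_mul, Ultrafilter.map_map, hid, Ultrafilter.map_id]
  have hidem : X.map (subst b) * p * (X.map (subst b) * p) = X.map (subst b) * p := by
    rw [← hmap, ← ultrafilter_map_mul, hq]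
  obtain ⟨y, hy⟩ := hp (X.map (subst b))
  rw [hmap, hmap]
  calc X.map (subst a) * p * (X.map (subst b) * p)
      = X.map (subst a) * y * (X.map (subst b) * p * (X.map (subst b) * p)) := by
        nth_rw 1 [← hy]
        simp only [mul_assoc]
    _ = X.map (subst a) * p := by rw [hidem, mul_assoc, hy]

theorem eventually_and_forall_eventually [Finite α] {M : Type*} [Monoid M] {e : α → Ultrafilter M}
    (he : ∀ a b, e a * e b = e a) {P : M → Prop} {w : M} {a : α}
    (h : ∀ᶠ x in e a, P (w * x)) :
    ∀ᶠ x in e a, P (w * x) ∧ ∀ b, ∀ᶠ y in e b, P (w * x * y) := by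
  refine h.and (eventually_all.2 fun b => ?_)
  rw [← he a b, Ultrafilter.eventually_mul] at h
  simpa only [mul_assoc] using h

/-- The reduced words of the infinite variable word `w₀ x₀ x₁ …`: the word `a i` is substituted in
`x i` for every `i < n`, and the rest is cut off. -/
def reduced (w₀ : FreeMonoid α) (x : ℕ → FreeMonoid (Option α)) (a : ℕ → α) : ℕ → FreeMonoid α
  | 0 => w₀
  | n + 1 => reduced w₀ x a n * subst (a n) (x n)

theorem exists_forall_reduced [Finite α] {q : Ultrafilter (FreeMonoid (Option α))}
    (hqv : variableWords α ∈ q)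
    (hq : ∀ a b : α, q.map (subst a) * q.map (subst b) = q.map (subst a)) {a₀ : α}
    {P : FreeMonoid α → Prop} (hP : ∀ᶠ w in q.map (subst a₀), P w) :
    ∃ w₀, ∃ x : ℕ → FreeMonoid (Option α), (∀ n, x n ∈ variableWords α) ∧
      ∀ a n, P (reduced w₀ x a n) := by
  let Large (w : FreeMonoid α) : Prop := P w ∧ ∀ b, ∀ᶠ y in q.map (subst b), P (w * y)
  obtain ⟨w₀, hw₀⟩ : ∃ w, Large w := by
    simpa only [one_mul] using
      (eventually_and_forall_eventually hq (w := 1) (by simpa only [one_mul] using hP)).exists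
  let State : Type _ := {F : Set (FreeMonoid α) // F.Finite ∧ ∀ w ∈ F, Large w}
  have hstep (F : State) : ∃ x ∈ variableWords α, ∀ w ∈ F.1, ∀ a, Large (w * subst a x) := by
    have h : ∀ᶠ x in q, ∀ w ∈ F.1, ∀ a, Large (w * subst a x) := by
      refine (eventually_all_finite F.2.1).2 fun w hw => eventually_all.2 fun a => ?_
      exact eventually_map.1 (eventually_and_forall_eventually hq ((F.2.2 w hw).2 a))
    obtain ⟨x, hxv, hx⟩ := (Eventually.and hqv h).exists
    exact ⟨x, hxv, hx⟩
  choose x hxv hx using hstep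
  let next (F : State) : State :=
    ⟨Set.image2 (fun w a => w * subst a (x F)) F.1 Set.univ, F.2.1.image2 _ Set.finite_univ, by
      rintro _ ⟨w, hw, a, -, rfl⟩
      exact hx F w hw a⟩
  let F : ℕ → State := fun n => Nat.rec
    ⟨{w₀}, Set.finite_singleton w₀, fun _ hw => Set.mem_singleton_iff.1 hw ▸ hw₀⟩
    (fun _ F => next F) n
  have hmem (a : ℕ → α) (n : ℕ) : reduced w₀ (fun n => x (F n)) a n ∈ (F n).1 := by
    induction n with
    | zero => exact rfl
    | succ n ih => exact ⟨_, ih, a n, trivial, rfl⟩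
  exact ⟨w₀, fun n => x (F n), fun n => hxv _, fun a n => ((F n).2.2 _ (hmem a n)).1⟩

theorem exists_reduced_monochromatic [Finite α] [Nonempty α] (P : FreeMonoid α → Prop) :
    ∃ w₀, ∃ x : ℕ → FreeMonoid (Option α), (∀ n, x n ∈ variableWords α) ∧
      ((∀ a n, P (reduced w₀ x a n)) ∨ ∀ a n, ¬P (reduced w₀ x a n)) := by
  obtain ⟨q, hqv, hq⟩ := exists_ultrafilter_map_subst_mul α
  rcases (q.map (subst (Classical.arbitrary α))).em P with hP | hP
  · obtain ⟨w₀, x, hx, h⟩ := exists_forall_reduced hqv hq hP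
    exact ⟨w₀, x, hx, Or.inl h⟩
  · obtain ⟨w₀, x, hx, h⟩ := exists_forall_reduced hqv hq hP
    exact ⟨w₀, x, hx, Or.inr h⟩

end Words

namespace RigidSurj

/-- The values of `σ` form an infinite word with prefix `l`. -/
def Begins (σ : RigidSurj) (l : List ℕ) : Prop := ∀ i x, l[i]? = some x → σ i = x

theorem Begins.map {τ : RigidSurj} {l : List ℕ} (h : Begins τ l) (σ : RigidSurj) :
    Begins (σ * τ) (l.map σ) := by
  intro i x hx
  rw [List.getElem?_map, Option.map_eq_some_iff] at hx
  obtain ⟨y, hy, rfl⟩ := hx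
  rw [mul_apply, h i y hy]

theorem Begins.eqOn {σ τ : RigidSurj} {l : List ℕ} {x : ℕ} (hσ : Begins σ (l ++ [x]))
    (hτ : Begins τ (l ++ [x])) : Set.EqOn σ τ (Set.Iic l.length) := by
  intro i hi
  have hlt : i < (l ++ [x]).length := by simpa [Nat.lt_succ_iff] using hi
  have hget := List.getElem?_eq_getElem hlt
  rw [hσ i _ hget, hτ i _ hget]

theorem Begins.first_eq {σ : RigidSurj} {l : List ℕ} {m : ℕ} (h : Begins σ (l ++ [m]))
    (hl : ∀ x ∈ l, x < m) : first σ m = l.length := by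
  refine RigidSurj.first_eq (h _ _ (by simp)) fun i hi => ?_
  rw [h i l[i] (by simp [List.getElem?_append_left hi])]
  exact hl _ (List.getElem_mem hi)

theorem exists_forall_begins {k : ℕ} {l : ℕ → List ℕ} (hzero : List.range k <+: l 0)
    (hsucc : ∀ n, l n ++ [k + n] <+: l (n + 1)) (hlt : ∀ n, ∀ x ∈ l n, x < k + n) :
    ∃ τ ∈ fixing k, ∀ n, Begins τ (l n ++ [k + n]) := by
  have hprefix {n m : ℕ} (hnm : n ≤ m) : l n <+: l m := by
    induction m, hnm using Nat.le_induction with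
    | base => exact List.prefix_rfl
    | succ m _ ih => exact ih.trans ((List.prefix_append _ _).trans (hsucc m))
  have hlength (n : ℕ) : k + n ≤ (l n).length := by
    induction n with
    | zero => simpa using hzero.length_le
    | succ n ih =>
      have h := (hsucc n).length_le
      rw [List.length_append, List.length_singleton] at h
      lia
  have hlift {n m i x : ℕ} (hnm : n ≤ m) (h : (l n)[i]? = some x) : (l m)[i]? = some x := by
    obtain ⟨t, ht⟩ := hprefix hnm
    rwa [← ht, List.getElem?_append_left (List.getElem?_eq_some_iff.1 h).1]
  let f (i : ℕ) : ℕ := (l (i + 1)).getD i 0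
  have hval {n i x : ℕ} (h : (l n)[i]? = some x) : f i = x := by
    have hi : i < (l (i + 1)).length := lt_of_lt_of_le (by lia) (hlength (i + 1))
    have hf : (l (i + 1))[i]? = some (f i) := by simp [f, hi]
    exact Option.some_injective _ <|
      (hlift (le_max_right n (i + 1)) hf).symm.trans (hlift (le_max_left n (i + 1)) h)
  have hval_append (n : ℕ) {i x : ℕ} (h : (l n ++ [k + n])[i]? = some x) : f i = x := by
    obtain ⟨t, ht⟩ := hsucc n
    exact hval (n := n + 1) <| by
      rwa [← ht, List.getElem?_append_left (List.getElem?_eq_some_iff.1 h).1]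
  have hfix (i : ℕ) (hi : i < k) : f i = i := by
    obtain ⟨t, ht⟩ := hzero
    exact hval (n := 0) <| by
      rw [← ht, List.getElem?_append_left (by simpa using hi), List.getElem?_range hi]
  have hfirst (y : ℕ) (hy : y ≥ k) : ∃ n, f n = y ∧ ∀ i < n, f i < y := by
    obtain ⟨n, rfl⟩ := Nat.exists_eq_add_of_le hy
    refine ⟨(l n).length, hval_append n (by simp), fun i hi => ?_⟩
    rw [hval (List.getElem?_eq_getElem hi)]
    exact hlt n _ (List.getElem_mem hi)
  obtain ⟨τ, hτ, hτf⟩ := exists_mem_fixing_coe_eq hfix hfirst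
  exact ⟨τ, hτ, fun n i x h => hτf ▸ hval_append n h⟩

variable {m : ℕ}

/-- A word over `Fin m`, preceded by the least elements of the first `m` classes. -/
def code (w : FreeMonoid (Fin m)) : List ℕ := List.range m ++ w.toList.map Fin.val

theorem lt_of_mem_code {w : FreeMonoid (Fin m)} {x : ℕ} (hx : x ∈ code w) : x < m := by
  rcases List.mem_append.1 hx with hx | hx
  · exact List.mem_range.1 hx
  · obtain ⟨i, -, rfl⟩ := List.mem_map.1 hx
    exact i.2

/-- The prefix of the code of the infinite variable word `w₀ x₀ x₁ …` which ends with `x (n - 1)`;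
the variable of `x i` is coded by `m + i`. -/
def codePrefix (w₀ : FreeMonoid (Fin m)) (x : ℕ → FreeMonoid (Option (Fin m))) : ℕ → List ℕ
  | 0 => code w₀
  | n + 1 => codePrefix w₀ x n ++ (x n).toList.map fun o => o.elim (m + n) Fin.val

theorem lt_of_mem_codePrefix {w₀ : FreeMonoid (Fin m)} {x : ℕ → FreeMonoid (Option (Fin m))}
    {n y : ℕ} (hy : y ∈ codePrefix w₀ x n) : y < m + n := by
  induction n with
  | zero => exact lt_of_mem_code hy
  | succ n ih =>
    rcases List.mem_append.1 hy with hy | hy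
    · exact (ih hy).trans (Nat.lt_succ_self _)
    · obtain ⟨_ | i, -, rfl⟩ := List.mem_map.1 hy
      · exact Nat.lt_succ_self _
      · exact i.2.trans_le (Nat.le_add_right _ _)

theorem map_codePrefix {σ : RigidSurj} (hσ : σ ∈ fixing m) (w₀ : FreeMonoid (Fin m))
    (x : ℕ → FreeMonoid (Option (Fin m))) {a : ℕ → Fin m} {n : ℕ}
    (ha : ∀ i < n, σ (m + i) = a i) :
    (codePrefix w₀ x n).map σ = code (reduced w₀ x a n) := by
  induction n with
  | zero =>
    exact (List.map_congr_left fun y hy => hσ y (lt_of_mem_code hy)).trans (List.map_id _)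
  | succ n ih =>
    have hx : ((x n).toList.map fun o => o.elim (m + n) Fin.val).map σ =
        (subst (a n) (x n)).toList.map Fin.val := by
      rw [subst, FreeMonoid.toList_map, List.map_map, List.map_map]
      refine List.map_congr_left fun o _ => ?_
      rcases o with _ | i
      · exact ha n (Nat.lt_succ_self n)
      · exact hσ i i.2
    rw [codePrefix, List.map_append, hx, ih fun i hi => ha i (hi.trans (Nat.lt_succ_self n)),
      reduced, code, code, FreeMonoid.toList_mul, List.map_append, List.append_assoc]

theorem exists_fixing_begins_codePrefix (w₀ : FreeMonoid (Fin m))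
    {x : ℕ → FreeMonoid (Option (Fin m))} (hx : ∀ n, x n ∈ variableWords (Fin m)) :
    ∃ τ ∈ fixing m, ∀ n, Begins τ (codePrefix w₀ x n ++ [m + n]) := by
  refine exists_forall_begins (List.prefix_append _ _) (fun n => ?_) fun n y hy =>
    lt_of_mem_codePrefix hy
  obtain ⟨t, ht⟩ := hx n
  rw [codePrefix, ← ht, FreeMonoid.toList_mul, List.map_append]
  exact (List.prefix_append_right_inj _).2 (List.prefix_append _ _)

theorem exists_begins_mul {w₀ : FreeMonoid (Fin m)} {x : ℕ → FreeMonoid (Option (Fin m))}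
    {τ : RigidSurj} (hτ : ∀ n, Begins τ (codePrefix w₀ x n ++ [m + n])) [Nonempty (Fin m)]
    {σ : RigidSurj} (hσ : σ ∈ fixing m) :
    ∃ a n, Begins (σ * τ) (code (reduced w₀ x a n) ++ [m]) := by
  have hm : m ≤ first σ m := le_first σ m
  obtain ⟨n, hn⟩ := Nat.exists_eq_add_of_le hm
  obtain ⟨a, ha⟩ : ∃ a : ℕ → Fin m, ∀ i < n, σ (m + i) = a i := by
    refine ⟨fun i => if h : σ (m + i) < m then ⟨σ (m + i), h⟩ else Classical.arbitrary _,
      fun i hi => ?_⟩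
    have hlt : σ (m + i) < m := lt_of_lt_first (by lia)
    simp only [dif_pos hlt]
  refine ⟨a, n, ?_⟩
  have h := (hτ n).map σ
  rwa [List.map_append, map_codePrefix hσ w₀ x ha, List.map_singleton, ← hn, apply_first] at h

theorem exists_forall_mul_or_forall_not_mul {C : RigidSurj → Prop}
    (hC : ∀ σ ∈ fixing m, ∀ σ' ∈ fixing m, Set.EqOn σ σ' (Set.Iic (first σ m)) → C σ → C σ') :
    ∃ τ ∈ fixing m, (∀ σ ∈ fixing m, C (σ * τ)) ∨ ∀ σ ∈ fixing m, ¬C (σ * τ) := by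
  rcases Nat.eq_zero_or_pos m with rfl | hm
  · have hC' (σ σ' : RigidSurj) : C σ → C σ' := by
      refine hC σ (mem_fixing_zero σ) σ' (mem_fixing_zero σ') fun i hi => ?_
      rw [first_eq (Nat.le_zero.1 (apply_le σ 0)) (by simp)] at hi
      rw [Nat.le_zero.1 hi, Nat.le_zero.1 (apply_le σ 0), Nat.le_zero.1 (apply_le σ' 0)]
    exact ⟨1, one_mem _, (Classical.em (C 1)).imp (fun h σ _ => hC' _ _ h)
      fun h σ _ hσ => h (hC' _ _ hσ)⟩
  have : Nonempty (Fin m) := ⟨⟨0, hm⟩⟩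
  have hlocal {σ σ' : RigidSurj} (hσ : σ ∈ fixing m) (hσ' : σ' ∈ fixing m)
      {w : FreeMonoid (Fin m)} (h : Begins σ (code w ++ [m])) (h' : Begins σ' (code w ++ [m])) :
      C σ → C σ' :=
    hC σ hσ σ' hσ' <| by
      rw [h.first_eq fun x => lt_of_mem_code]
      exact h.eqOn h'
  obtain ⟨w₀, x, hx, hP⟩ := exists_reduced_monochromatic (α := Fin m)
    fun w => ∃ σ ∈ fixing m, Begins σ (code w ++ [m]) ∧ C σ
  obtain ⟨τ, hτ, hbegins⟩ := exists_fixing_begins_codePrefix w₀ hx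
  refine ⟨τ, hτ, hP.imp (fun hP σ hσ => ?_) fun hP σ hσ hCσ => ?_⟩ <;>
    obtain ⟨a, n, h⟩ := exists_begins_mul hbegins hσ
  · obtain ⟨ρ, hρ, hρ_begins, hCρ⟩ := hP a n
    exact hlocal hρ (mul_mem hσ hτ) hρ_begins h hCρ
  · exact hP a n ⟨σ * τ, mul_mem hσ hτ, h, hCσ⟩

end RigidSurj
/-! ### Completely Ramsey sets -/

namespace RigidSurj

/-- Every coarsening of `γ` keeping its first `k` classes apart belongs to `X`. -/
def Accepts (X : Set RigidSurj) (k : ℕ) (γ : RigidSurj) : Prop := ∀ σ ∈ fixing k, σ * γ ∈ X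

/-- For each `m ≥ k`, every `σ * β` is either accepted at level `m` or has no accepted coarsening
keeping its first `m` classes apart. -/
def Decides (X : Set RigidSurj) (k : ℕ) (β : RigidSurj) : Prop :=
  ∀ m ≥ k, ∀ σ : RigidSurj,
    Accepts X m (σ * β) ∨ ∀ τ ∈ fixing m, ¬Accepts X m (τ * (σ * β))

/-- Membership in `X` is constant on the coarsenings of `γ` keeping its first `k` classes apart. -/
def Homogeneous (X : Set RigidSurj) (k : ℕ) (γ : RigidSurj) : Prop :=
  Accepts X k γ ∨ Accepts Xᶜ k γ

/-- The completely Ramsey sets, for the neighbourhoods `{σ * β | σ ∈ fixing k}`. -/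
def CompletelyRamsey (X : Set RigidSurj) : Prop :=
  ∀ k β, ∃ τ ∈ fixing k, Homogeneous X k (τ * β)

/-- Openness in the topology of pointwise convergence. -/
def IsPointwiseOpen (Y : Set RigidSurj) : Prop :=
  ∀ σ ∈ Y, ∃ d, ∀ σ' : RigidSurj, Set.EqOn σ' σ (Set.Iio d) → σ' ∈ Y

variable {X : Set RigidSurj} {k m : ℕ} {β γ : RigidSurj}

theorem Accepts.mul_left (h : Accepts X k γ) {s : RigidSurj} (hs : s ∈ fixing k) :
    Accepts X k (s * γ) := fun σ hσ => by
  rw [← mul_assoc]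
  exact h _ (mul_mem hσ hs)

theorem Accepts.mem (h : Accepts X k γ) : γ ∈ X := h 1 (one_mem _)

theorem IsPointwiseOpen.preimage_mul_right {Y : Set RigidSurj} (hY : IsPointwiseOpen Y)
    (τ : RigidSurj) : IsPointwiseOpen ((· * τ) ⁻¹' Y) := by
  intro σ hσ
  obtain ⟨d, hd⟩ := hY _ hσ
  exact ⟨d, fun σ' h => hd _ fun i hi => h ((apply_le τ i).trans_lt hi)⟩

theorem exists_decides (X : Set RigidSurj) (k : ℕ) (β : RigidSurj) :
    ∃ τ ∈ fixing k, Decides X k (τ * β) := by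
  have hdecides (m : ℕ) : IsDenseOpen (fixing m)
      {γ | Accepts X m γ ∨ ∀ τ ∈ fixing m, ¬Accepts X m (τ * γ)} := by
    refine ⟨fun γ => ?_, fun s hs γ h => h.imp (fun h => h.mul_left hs) fun h τ hτ => ?_⟩
    · by_cases h : ∃ τ ∈ fixing m, Accepts X m (τ * γ)
      · exact h.imp fun τ hτ => hτ.imp_right Or.inl
      · exact ⟨1, one_mem _, Or.inr fun τ hτ hacc => h ⟨τ, hτ, hacc⟩⟩
    · rw [← mul_assoc]
      exact h _ (mul_mem hτ hs)
  obtain ⟨τ, hτ, h⟩ := exists_fusion_forall_mul fun m (_ : m ≥ k) =>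
    (hdecides m).preimage_mul_right β
  exact ⟨τ, hτ, h⟩

theorem Decides.accepts_of_eqOn (h : Decides X k β) {σ σ' : RigidSurj} {d : ℕ}
    (hσσ' : Set.EqOn σ' σ (Set.Iio d)) (hk : k ≤ height σ d)
    (hσ : Accepts X (height σ d) (σ * β)) : Accepts X (height σ d) (σ' * β) := by
  obtain ⟨s, hs, hsσ⟩ := exists_mul_stem σ d
  obtain ⟨s', hs', rfl⟩ := exists_mul_stem_of_eqOn hσσ'
  rw [mul_assoc]
  refine ((h _ hk (stem σ d)).resolve_right fun hrej => hrej s hs ?_).mul_left hs'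
  rwa [← mul_assoc, hsσ]

theorem Decides.isDenseOpen_accepts_or_forall_not_accepts (h : Decides X k β) (hm : m ≥ k) :
    IsDenseOpen (fixing m)
      {γ | Accepts X m (γ * β) ∨ ∀ s ∈ fixing m, ¬Accepts X (m + 1) (s * γ * β)} := by
  refine ⟨fun γ => ?_, fun s hs γ hγ => hγ.imp (fun hacc => ?_) fun hrej t ht => ?_⟩
  · have hlocal : ∀ σ ∈ fixing m, ∀ σ' ∈ fixing m, Set.EqOn σ σ' (Set.Iic (first σ m)) →
        Accepts X (m + 1) (σ * γ * β) → Accepts X (m + 1) (σ' * γ * β) := by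
      intro σ _ σ' _ hσσ' hacc
      have hheight := height_first_succ (σ * γ) m
      have hEqOn : Set.EqOn ⇑(σ' * γ) ⇑(σ * γ) (Set.Iio (first (σ * γ) m + 1)) := by
        intro i hi
        rw [first_mul, Set.mem_Iio, Nat.lt_succ_iff] at hi
        exact (hσσ' (apply_le_of_le_first hi)).symm
      rw [← hheight] at hacc ⊢
      exact h.accepts_of_eqOn hEqOn (by lia) hacc
    obtain ⟨τ, hτ, hacc | hrej⟩ := exists_forall_mul_or_forall_not_mul hlocal
    · exact ⟨τ, hτ, Or.inl fun σ hσ => by simpa only [mul_assoc] using (hacc σ hσ).mem⟩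
    · exact ⟨τ, hτ, Or.inr fun s hs => by simpa only [mul_assoc] using hrej s hs⟩
  · rw [mul_assoc]
    exact hacc.mul_left hs
  · rw [← mul_assoc]
    exact hrej _ (mul_mem ht hs)

theorem exists_homogeneous_of_isPointwiseOpen (hX : IsPointwiseOpen ((· * β) ⁻¹' X)) (k : ℕ) :
    ∃ τ ∈ fixing k, Homogeneous X k (τ * β) := by
  obtain ⟨T₁, hT₁, hdec⟩ := exists_decides X k β
  obtain ⟨T₂, hT₂, hT⟩ := exists_fusion_forall_mul fun m (hm : m ≥ k) =>
    hdec.isDenseOpen_accepts_or_forall_not_accepts hm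
  refine ⟨T₂ * T₁, mul_mem hT₂ hT₁, ?_⟩
  rw [mul_assoc]
  by_cases hacc : ∃ τ ∈ fixing k, Accepts X k (τ * (T₂ * (T₁ * β)))
  · refine Or.inl ((hdec k le_rfl T₂).resolve_right fun hrej => ?_)
    exact hacc.elim fun τ hτ => hrej τ hτ.1 hτ.2
  refine Or.inr fun σ hσ hσX => ?_
  have hrej {d : ℕ} (hd : k ≤ d) :
      k ≤ height σ d ∧ ¬Accepts X (height σ d) (σ * (T₂ * (T₁ * β))) := by
    induction d, hd using Nat.le_induction with
    | base =>
      rw [height_of_mem_fixing hσ]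
      exact ⟨le_rfl, fun h => hacc ⟨σ, hσ, h⟩⟩
    | succ d _ ih =>
      rcases height_succ σ d with h | h <;> rw [h]
      · exact ih
      · refine ⟨ih.1.trans (Nat.le_succ _), ?_⟩
        simpa only [one_mul, mul_assoc] using
          (hT _ ih.1 σ).resolve_left (by simpa only [mul_assoc] using ih.2) 1 (one_mem _)
  obtain ⟨d, hd⟩ := hX.preimage_mul_right (T₂ * T₁) σ
    (by simpa only [Set.mem_preimage, mul_assoc] using hσX)
  refine (hrej (le_max_left k d)).2 fun s hs => ?_
  have := hd (s * σ) fun i hi => hs _ (apply_lt_height (lt_max_of_lt_right hi))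
  simpa only [Set.mem_preimage, mul_assoc] using this

namespace CompletelyRamsey

theorem isDenseOpen (hX : CompletelyRamsey X) (k : ℕ) :
    IsDenseOpen (fixing k) {γ | Homogeneous X k γ} :=
  ⟨hX k, fun _ hs _ h => h.imp (fun h => h.mul_left hs) fun h => h.mul_left hs⟩

theorem empty : CompletelyRamsey ∅ := fun _ _ => ⟨1, one_mem _, Or.inr fun _ _ => id⟩

theorem compl (hX : CompletelyRamsey X) : CompletelyRamsey Xᶜ := fun k β => by
  simpa only [Homogeneous, compl_compl, or_comm] using hX k β

theorem iUnion {X : ℕ → Set RigidSurj} (hX : ∀ n, CompletelyRamsey (X n)) :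
    CompletelyRamsey (⋃ n, X n) := by
  intro k β
  obtain ⟨T, hT, hhom⟩ := exists_fusion_forall_mul fun m (_ : m ≥ k) =>
    (IsDenseOpen.iInter fun n : Fin (m + 1) => (hX n).isDenseOpen m).preimage_mul_right β
  have hopen : IsPointwiseOpen ((· * (T * β)) ⁻¹' ⋃ n, X n) := by
    intro σ hσ
    obtain ⟨n, hn⟩ := Set.mem_iUnion.1 hσ
    let d := first σ (max k n)
    refine ⟨d, fun σ' hσ' => Set.mem_iUnion.2 ⟨n, ?_⟩⟩
    obtain ⟨s, hs, hsσ⟩ := exists_mul_stem σ d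
    obtain ⟨s', hs', rfl⟩ := exists_mul_stem_of_eqOn hσ'
    rw [height_first] at hs hs'
    have hstem : Homogeneous (X n) (max k n) (stem σ d * (T * β)) :=
      Set.mem_iInter.1 (hhom _ (le_max_left k n) (stem σ d))
        ⟨n, Nat.lt_succ_iff.2 (le_max_right k n)⟩
    rw [← hsσ] at hn
    exact hstem.resolve_right (fun hacc => hacc s hs hn) s' hs'
  obtain ⟨τ, hτ, h⟩ := exists_homogeneous_of_isPointwiseOpen hopen k
  exact ⟨τ * T, mul_mem hτ hT, by rwa [mul_assoc]⟩

theorem setOf_apply_eq (p n : ℕ) : CompletelyRamsey {g | g p = n} := by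
  intro k β
  have hopen : IsPointwiseOpen ((· * β) ⁻¹' {g | g p = n}) := fun _ hσ =>
    ⟨β p + 1, fun _ h => (h (Nat.lt_succ_self _)).trans hσ⟩
  exact exists_homogeneous_of_isPointwiseOpen hopen k

theorem exists_forall_eqOn (hX : CompletelyRamsey X) (σ₀ : RigidSurj) (d : ℕ) (β : RigidSurj) :
    ∃ τ ∈ fixing d,
      (∀ σ : RigidSurj, Set.EqOn σ σ₀ (Set.Iio d) → σ * (τ * β) ∈ X) ∨
      ∀ σ : RigidSurj, Set.EqOn σ σ₀ (Set.Iio d) → σ * (τ * β) ∉ X := by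
  obtain ⟨τ', hτ', hhom⟩ := hX (height σ₀ d) (stem σ₀ d * β)
  obtain ⟨τ, hτ, h⟩ := exists_forall_eqOn_mul_eq σ₀ d hτ'
  refine ⟨τ, hτ, hhom.imp ?_ ?_⟩ <;>
  · intro hacc σ hσ
    obtain ⟨s, hs, hst⟩ := h σ hσ
    rw [← mul_assoc, hst, mul_assoc, mul_assoc]
    exact hacc s hs

end CompletelyRamsey

/-- The `σ`-algebra of completely Ramsey sets. -/
instance : MeasurableSpace RigidSurj where
  MeasurableSet' := CompletelyRamsey
  measurableSet_empty := .empty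
  measurableSet_compl _ := .compl
  measurableSet_iUnion _ := .iUnion

theorem measurable_apply (p : ℕ) : Measurable fun g : RigidSurj => g p :=
  measurable_to_countable' (CompletelyRamsey.setOf_apply_eq p)

end RigidSurj
/-! ### Uniformisation of a family of equivalence relations -/

namespace RigidSurj

/-- The partition whose only nontrivial class is `{a, d}`. -/
def merge {a d : ℕ} (h : a < d) : RigidSurj where
  toFun x := if x < d then x else if x = d then a else x - 1
  exists_first' y := by
    rcases lt_or_ge y d with hy | hy
    · exact ⟨y, if_pos hy, fun i hi => by rwa [if_pos (hi.trans hy)]⟩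
    · refine ⟨y + 1, ?_, fun i hi => ?_⟩
      · rw [if_neg (by lia), if_neg (by lia), Nat.add_sub_cancel]
      · split_ifs <;> lia

variable {a b d : ℕ}

theorem merge_mem_fixing (h : a < d) : merge h ∈ fixing d := fun _ hi => if_pos hi

theorem merge_apply_self (h : a < d) : merge h d = a := by
  change (if d < d then d else if d = d then a else d - 1) = a
  simp

theorem mul_merge_eq {σ : RigidSurj} (hσ : σ a = σ b) (ha : a < d) (hb : b < d) :
    σ * merge ha = σ * merge hb := by
  ext x
  change σ (if x < d then x else if x = d then a else x - 1) =
    σ (if x < d then x else if x = d then b else x - 1)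
  split_ifs
  · rfl
  · exact hσ
  · rfl

/-- If `E (σ * T)` contains the kernel of `T`, then it identifies the `T`-classes `a` and `b` as
soon as `σ` does. -/
def Respects (E : RigidSurj → Setoid ℕ) (a b : ℕ) (σ T : RigidSurj) : Prop :=
  σ a = σ b → Setoid.ker T ≤ E (σ * T) → E (σ * T) (first T a) (first T b)

variable {E : RigidSurj → Setoid ℕ}

theorem Respects.of_mul {σ τ T : RigidSurj} (hτ : τ ∈ fixing d) (ha : a < d) (hb : b < d)
    (h : Respects E a b (σ * τ) T) : Respects E a b σ (τ * T) := by
  intro hσ hker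
  rw [first_mul, first_mul, first_of_mem_fixing hτ ha, first_of_mem_fixing hτ hb, ← mul_assoc]
  refine h (by rw [mul_apply, mul_apply, hτ a ha, hτ b hb, hσ]) ?_
  rw [mul_assoc]
  exact le_trans (fun _ _ hij => congrArg τ hij) hker

/- The class `d` of `T` is the probe: `τ` merges it with `b` in the first case and with `a` in the
second. -/
theorem exists_forall_respects (hE : ∀ i j, MeasurableSet {g | E g i j}) (ha : a < d) (hb : b < d)
    (σ₀ T : RigidSurj) : ∃ τ ∈ fixing d,
      ∀ σ : RigidSurj, Set.EqOn σ σ₀ (Set.Iio d) → Respects E a b σ (τ * T) := by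
  obtain ⟨τ, hτ, hmem | hnot_mem⟩ :=
    CompletelyRamsey.exists_forall_eqOn (hE (first T a) (first T d)) σ₀ d (merge ha * T)
  · have hτb : τ * merge hb ∈ fixing d := mul_mem hτ (merge_mem_fixing hb)
    refine ⟨τ * merge hb, hτb, fun σ hσ hab hker => ?_⟩
    have hab' : (σ * τ) a = (σ * τ) b := by rw [mul_apply, mul_apply, hτ a ha, hτ b hb, hab]
    have hprobe : E (σ * (τ * merge hb * T)) (first T a) (first T d) := by
      have h := hmem σ hσ
      rwa [← mul_assoc τ, ← mul_assoc σ, ← mul_assoc σ τ, mul_merge_eq hab' ha hb,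
        mul_assoc σ τ, mul_assoc σ] at h
    rw [first_mul _ T, first_mul _ T, first_of_mem_fixing hτb ha, first_of_mem_fixing hτb hb]
    refine Setoid.trans' _ hprobe (hker ?_)
    simp only [Setoid.ker_def, mul_apply, apply_first, merge_apply_self, merge_mem_fixing hb b hb]
  · have hτa : τ * merge ha ∈ fixing d := mul_mem hτ (merge_mem_fixing ha)
    refine ⟨τ * merge ha, hτa, fun σ hσ _ hker => (hnot_mem σ hσ ?_).elim⟩
    rw [← mul_assoc τ]
    refine hker ?_
    simp only [Setoid.ker_def, mul_apply, apply_first, merge_apply_self, merge_mem_fixing ha a ha]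

theorem exists_forall_ker_le (hE : ∀ i j, MeasurableSet {g | E g i j}) (k : ℕ) (β : RigidSurj) :
    ∃ T ∈ fixing k, ∀ σ : RigidSurj, Setoid.ker (T * β) ≤ E (σ * (T * β)) →
      Setoid.ker (σ * (T * β)) ≤ E (σ * (T * β)) := by
  have hopen (d : ℕ) (p : Fin d × Fin d) :
      IsDenseOpen (fixing d) {T | ∀ σ, Respects E p.1 p.2 σ T} :=
    isDenseOpen_setOf_forall (exists_forall_respects hE p.1.2 p.2.2)
      fun _ _ _ hτ h => h.of_mul hτ p.1.2 p.2.2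
  obtain ⟨T, hT, hrespects⟩ := exists_fusion fun d (_ : d ≥ k) =>
    (IsDenseOpen.iInter (hopen d)).preimage_mul_right β
  refine ⟨T, hT, fun σ hker i j hij => ?_⟩
  let h := T * β
  let d := max k (max (h i) (h j) + 1)
  have hclasses : E (σ * h) (first h (h i)) (first h (h j)) :=
    Set.mem_iInter.1 (hrespects d (le_max_left _ _)) (⟨h i, by lia⟩, ⟨h j, by lia⟩) σ hij hker
  have hfirst (n : ℕ) : E (σ * h) (first h (h n)) n := hker (apply_first h (h n))
  exact Setoid.trans' _ (Setoid.symm' _ (hfirst i)) (Setoid.trans' _ hclasses (hfirst j))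

end RigidSurj

/-! ### Partitions as rigid surjections -/

namespace Einf

theorem Coarsen.trans {A B C : Einf} (hAB : Coarsen A B) (hBC : Coarsen B C) : Coarsen A C :=
  fun i j h => hAB i j (hBC i j h)

theorem rn_eq_rn {A B : Einf} {n : ℕ} (hmu : A.mu n = B.mu n)
    (hrel : ∀ i < B.mu n, ∀ j < B.mu n, A.1 i j ↔ B.1 i j) : rn A n = rn B n := by
  unfold rn
  generalize A.mu n = a at hmu
  subst hmu
  congr 1
  ext i j
  exact hrel i i.2 j j.2

/-- The defining predicate of `mu`: `k` is the least element of its `A`-class. -/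
def IsLeastRep (A : Einf) (k : ℕ) : Prop := ∀ m, A.1 m k → k ≤ m

theorem exists_isLeastRep (A : Einf) (x : ℕ) : ∃ r, A.IsLeastRep r ∧ A.1 r x ∧ r ≤ x := by
  have h : ∃ r, A.1 r x := ⟨x, A.1.refl x⟩
  exact ⟨Nat.find h, fun m hm => Nat.find_min' h (A.1.trans hm (Nat.find_spec h)),
    Nat.find_spec h, Nat.find_min' h (A.1.refl x)⟩

theorem IsLeastRep.eq {A : Einf} {r s : ℕ} (hr : A.IsLeastRep r) (hs : A.IsLeastRep s)
    (h : A.1 r s) : r = s :=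
  le_antisymm (hr s (A.1.symm h)) (hs r h)

theorem infinite_setOf_isLeastRep (A : Einf) : {k | A.IsLeastRep k}.Infinite := by
  intro hfin
  have := A.2
  refine Set.infinite_univ ((hfin.image (Quotient.mk A.1)).subset fun q _ => ?_)
  obtain ⟨x, rfl⟩ := Quotient.exists_rep q
  obtain ⟨r, hr, hrx, -⟩ := A.exists_isLeastRep x
  exact ⟨r, hr, Quotient.sound hrx⟩

end Einf

open RigidSurj

/-- The partition encoded by a rigid surjection. -/
def toEinf (σ : RigidSurj) : Einf :=
  ⟨Setoid.ker σ, Infinite.of_injective (fun y => Quotient.mk _ (first σ y)) fun y z h => by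
    simpa [Setoid.ker_def] using Quotient.exact h⟩

theorem toEinf_surjective : Function.Surjective toEinf := by
  intro A
  have hinf := A.infinite_setOf_isLeastRep
  choose rep hrep hrel hle using A.exists_isLeastRep
  have hrep_self {r : ℕ} (hr : A.IsLeastRep r) : rep r = r := (hrep r).eq hr (hrel r)
  refine ⟨⟨fun x => Nat.count A.IsLeastRep (rep x), fun y =>
    ⟨Nat.nth A.IsLeastRep y, ?_, fun i hi => ?_⟩⟩, Subtype.ext (Setoid.ext fun x y => ?_)⟩
  · rw [hrep_self (Nat.nth_mem_of_infinite hinf y), Nat.count_nth_of_infinite hinf]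
  · exact (Nat.count_strict_mono (hrep i) ((hle i).trans_lt hi)).trans_eq
      (Nat.count_nth_of_infinite hinf y)
  · have hcount : Nat.count A.IsLeastRep (rep x) = Nat.count A.IsLeastRep (rep y) ↔
        rep x = rep y := ⟨Nat.count_injective (hrep x) (hrep y), congrArg _⟩
    refine hcount.trans ⟨fun h => A.1.trans (A.1.symm (hrel x)) (h ▸ hrel y), fun h => ?_⟩
    exact (hrep x).eq (hrep y) (A.1.trans (hrel x) (A.1.trans h (A.1.symm (hrel y))))

theorem mu_toEinf (σ : RigidSurj) (n : ℕ) : (toEinf σ).mu n = first σ n := by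
  have hrange (k : ℕ) (hk : (toEinf σ).IsLeastRep k) : k ∈ Set.range (first σ) :=
    ⟨σ k, le_antisymm (first_apply_le σ k) (hk _ (apply_first σ _))⟩
  have hfirst (y : ℕ) : (toEinf σ).IsLeastRep (first σ y) := fun m (hm : σ m = σ (first σ y)) => by
    rw [apply_first] at hm
    exact hm ▸ first_apply_le σ m
  have h := Nat.nth_comp_of_strictMono (n := n) (first_strictMono σ) hrange
    fun hfin => (infinite_setOf_isLeastRep _ hfin).elim
  simp only [hfirst, Nat.nth_true] at h
  exact h.symm

theorem coarsen_toEinf_mul (σ g : RigidSurj) : Coarsen (toEinf (σ * g)) (toEinf g) :=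
  fun _ _ h => congrArg σ h

theorem coarsen_toEinf_iff {A : Einf} {g : RigidSurj} :
    Coarsen A (toEinf g) ↔ ∃ σ : RigidSurj, toEinf (σ * g) = A := by
  refine ⟨fun h => ?_, ?_⟩
  · obtain ⟨ρ, rfl⟩ := toEinf_surjective A
    obtain ⟨σ, hσ⟩ := exists_mul_eq_of_ker_le (g := ρ) (h := g) fun i j => h i j
    exact ⟨σ, congrArg toEinf hσ⟩
  · rintro ⟨σ, rfl⟩
    exact coarsen_toEinf_mul σ g

theorem rn_toEinf_mul {T β : RigidSurj} {n : ℕ} (hT : T ∈ fixing (n + 1)) :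
    rn (toEinf (T * β)) n = rn (toEinf β) n := by
  have hfix {i : ℕ} (hi : i < first β n) : (T * β) i = β i :=
    hT _ ((lt_of_lt_first hi).trans (Nat.lt_succ_self n))
  refine rn_eq_rn ?_ fun i hi j hj => ?_
  · rw [mu_toEinf, mu_toEinf, first_mul, first_of_mem_fixing hT (Nat.lt_succ_self n)]
  · rw [mu_toEinf] at hi hj
    change (T * β) i = (T * β) j ↔ β i = β j
    rw [hfix hi, hfix hj]

theorem toCS_toEinf (σ : RigidSurj) (n m : ℕ) : toCS (toEinf σ) n m = decide (σ m = n) := by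
  rw [toCS, mu_toEinf, decide_eq_decide]
  change σ m = σ (first σ n) ↔ σ m = n
  rw [apply_first]

theorem measurable_toEinf : Measurable toEinf := by
  refine measurable_comap_iff.2 (measurable_pi_iff.2 fun n => measurable_pi_iff.2 fun m => ?_)
  simp only [Function.comp_apply, toCS_toEinf]
  exact (Measurable.of_discrete (f := fun x : ℕ => decide (x = n))).comp (measurable_apply m)

theorem measurableSet_setOf_class_eq (i j : ℕ) : MeasurableSet {A : Einf | A.1 i j} := by
  have hrow (n m : ℕ) : MeasurableSet {A : Einf | toCS A n m = true} :=
    ((measurable_pi_apply m).comp ((measurable_pi_apply n).comp (comap_measurable toCS)))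
      (measurableSet_singleton true)
  have heq : {A : Einf | A.1 i j} = ⋃ n, {A | toCS A n i = true} ∩ {A | toCS A n j = true} := by
    ext A
    obtain ⟨σ, rfl⟩ := toEinf_surjective A
    simp only [Set.mem_iUnion, Set.mem_inter_iff, Set.mem_ofPred_eq, toCS_toEinf, decide_eq_true_eq]
    exact ⟨fun h => ⟨σ j, h, rfl⟩, fun ⟨n, hi, hj⟩ => hi.trans hj.symm⟩
  rw [heq]
  exact .iUnion fun n => (hrow n i).inter (hrow n j)

theorem measurableSet_setOf_rel {f : Einf → Einf} (hf : Measurable f) (i j : ℕ) :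
    MeasurableSet {g | (f (toEinf g)).1 i j} :=
  (hf.comp measurable_toEinf) (measurableSet_setOf_class_eq i j)

theorem borel_map_coarsening_lemma_general (f : Einf → Setoid ℕ)
    (hf : ∀ i j, MeasurableSet {g | f (toEinf g) i j}) :
    ∃ D : Set Einf, RamseyConull D ∧ ∀ B ∈ D, ∀ A : Einf, Coarsen A B → B.1 ≤ f A → A.1 ≤ f A := by
  refine ⟨{B | ∀ A, Coarsen A B → B.1 ≤ f A → A.1 ≤ f A}, ?_, fun B hB => hB⟩
  rintro _ A₀ ⟨B₀, ⟨n, rfl⟩, hB₀⟩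
  obtain ⟨β, rfl⟩ := toEinf_surjective B₀
  obtain ⟨T, hT, hker⟩ := exists_forall_ker_le (E := fun g => f (toEinf g)) hf (n + 1) β
  refine ⟨toEinf (T * β), ⟨⟨n, rn_toEinf_mul hT⟩, (coarsen_toEinf_mul T β).trans hB₀⟩, ?_⟩
  refine Set.eq_empty_of_forall_notMem fun C ⟨⟨_, hC⟩, hCD⟩ => hCD fun A hAC hfA => ?_
  obtain ⟨σ, rfl⟩ := coarsen_toEinf_iff.1 (hAC.trans hC)
  exact hker σ fun i j h => hfA (hC i j h)

/-- Lemma 6.3: for every Borel map `f : 𝓔_∞ → 𝓔_∞` there is a Ramsey conull set `𝓓` such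
that for all `B ∈ 𝓓` and `A ≤ B`, if `f(A) ≤ B` then `f(A) ≤ A`. -/
theorem borel_map_coarsening_lemma (f : Einf → Einf) (hf : Measurable f) :
    ∃ D : Set Einf, RamseyConull D ∧
      ∀ B ∈ D, ∀ A : Einf, Coarsen A B → Coarsen (f A) B → Coarsen (f A) A := by
  obtain ⟨D, hD, h⟩ :=
    borel_map_coarsening_lemma_general (fun A => (f A).1) (measurableSet_setOf_rel hf)
  exact ⟨D, hD, fun B hB A hAB hfA _ _ hij => h B hB A hAB (fun i j => hfA i j) hij⟩
end
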